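/- arXiv:1504.03037 — 2 statements merged into one kernel-verified Lean document; each statement's English description precedes it below -/
import Mathlib

section
/- Let T be a locally simple complete CLO theory such that IT(T) is finite. Then T is ℵ₀-categorical, and any two models of T (of any cardinality) are back-and-forth equivalent. -/
open FirstOrder Language Set

/-- Relation symbols of the language `L_κ` of colored linear orders:
a binary `<` and a unary color predicate for each `i : ι`. -/
inductive CLORel (ι : Type) : ℕ → Type
  | lt : CLORel ι 2
  | color (i : ι) : CLORel ι 1

/-- The language `L_κ`, where the colors are indexed by `ι`. -/
def CLOLang (ι : Type) : Language :=
  ⟨fun _ => Empty, CLORel ι⟩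

/-- Interpretation of the relation symbols on a linear order `M` with colors `c`. -/
def cloRelMap {ι M : Type} [LinearOrder M] (c : ι → Set M) :
    ∀ {n}, CLORel ι n → (Fin n → M) → Prop
  | _, .lt => fun v => v 0 < v 1
  | _, .color i => fun v => v 0 ∈ c i

/-- The canonical `L_κ`-structure (a colored linear order, CLO) on a linear
order `M` whose colors are given by `c : ι → Set M`. -/
def CLOStr (ι M : Type) [LinearOrder M] (c : ι → Set M) : (CLOLang ι).Structure M where
  funMap := fun f => Empty.elim f
  RelMap := cloRelMap c

/-- Satisfaction of an `L_κ`-formula in the CLO `(M, <, c)`. -/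
def Sat {ι : Type} (M : Type) [LinearOrder M] (c : ι → Set M) {α : Type}
    (φ : (CLOLang ι).Formula α) (v : α → M) : Prop :=
  letI := CLOStr ι M c
  φ.Realize v

/-- The induced colors on a subset of a CLO. -/
def subColor {ι M : Type} (c : ι → Set M) (s : Set M) : ι → Set s :=
  fun i => {x | (x : M) ∈ c i}

/-- Elementary equivalence of CLOs. -/
def CLOEquiv (ι : Type) (M : Type) [LinearOrder M] (cM : ι → Set M)
    (N : Type) [LinearOrder N] (cN : ι → Set N) : Prop :=
  letI := CLOStr ι M cM
  letI := CLOStr ι N cN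
  M ≅[CLOLang ι] N

/-- Isomorphism of CLOs (as `L_κ`-structures). -/
def CLOIso (ι : Type) (M : Type) [LinearOrder M] (cM : ι → Set M)
    (N : Type) [LinearOrder N] (cN : ι → Set N) : Prop :=
  letI := CLOStr ι M cM
  letI := CLOStr ι N cN
  Nonempty (M ≃[CLOLang ι] N)

/-- The complete theory of a CLO. -/
def CLOTheory (ι : Type) (M : Type) [LinearOrder M] (c : ι → Set M) : (CLOLang ι).Theory :=
  letI := CLOStr ι M c
  (CLOLang ι).completeTheory M

/-- The induced colors on a lexicographic sum `Σₗ i, A i` of CLOs. -/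
def sigmaColor {ι I : Type} {A : I → Type} (c : ∀ i, ι → Set (A i)) :
    ι → Set (Σₗ i, A i) :=
  fun k => {x | (ofLex x).2 ∈ c (ofLex x).1 k}

/-- The induced colors on a two-term lexicographic sum `α ⊕ₗ β` of CLOs. -/
def sumColor2 {ι α β : Type} (ca : ι → Set α) (cb : ι → Set β) : ι → Set (α ⊕ₗ β) :=
  fun k => {x | Sum.elim (· ∈ ca k) (· ∈ cb k) (ofLex x)}

/-- The set defined by a parameter-free formula in one variable in a CLO. -/
def FmlSet (ι : Type) (M : Type) [LinearOrder M] (c : ι → Set M)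
    (φ : (CLOLang ι).Formula Unit) : Set M :=
  {x | Sat M c φ fun _ => x}

/-- A CLO is self-additive if it has more than one point and its only
convex parameter-free-definable subsets are `∅` and the whole order. -/
def SelfAdditive (ι : Type) (M : Type) [LinearOrder M] (c : ι → Set M) : Prop :=
  Nontrivial M ∧
    ∀ φ : (CLOLang ι).Formula Unit, (FmlSet ι M c φ).OrdConnected →
      FmlSet ι M c φ = ∅ ∨ FmlSet ι M c φ = Set.univ

/-- `a ∼ b`: some set definable with parameter `a` is convex, bounded above and
below, and contains both `a` and `b`. -/
def SimRel (ι : Type) {M : Type} [LinearOrder M] (c : ι → Set M) (a b : M) : Prop :=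
  ∃ φ : (CLOLang ι).Formula (Unit ⊕ Unit),
    (Set.OrdConnected {x | Sat M c φ (Sum.elim (fun _ => x) fun _ => a)}) ∧
    (∃ u : M, ∀ z ∈ {x | Sat M c φ (Sum.elim (fun _ => x) fun _ => a)}, z < u) ∧
    (∃ l : M, ∀ z ∈ {x | Sat M c φ (Sum.elim (fun _ => x) fun _ => a)}, l < z) ∧
    a ∈ {x | Sat M c φ (Sum.elim (fun _ => x) fun _ => a)} ∧
    b ∈ {x | Sat M c φ (Sum.elim (fun _ => x) fun _ => a)}

/-- `f : M → N` is an elementary map of CLOs. -/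
def IsElemMap (ι : Type) {M N : Type} [LinearOrder M] [LinearOrder N]
    (cM : ι → Set M) (cN : ι → Set N) (f : M → N) : Prop :=
  ∀ (k : ℕ) (φ : (CLOLang ι).Formula (Fin k)) (v : Fin k → M),
    Sat M cM φ v ↔ Sat N cN φ (f ∘ v)

/-- A subset of a CLO, with its induced structure, is an elementary substructure. -/
def IsElemSubset (ι : Type) (B : Type) [LinearOrder B] (cB : ι → Set B) (s : Set B) : Prop :=
  IsElemMap ι (subColor cB s) cB (Subtype.val : s → B)

/-- A complete `L_κ`-theory is ℵ₀-categorical: any two at-most-countable CLO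
models of it are isomorphic.  (Finite and empty models are allowed.) -/
def Aleph0CatTheory (ι : Type) (T : (CLOLang ι).Theory) : Prop :=
  ∀ (N₁ N₂ : Type) (i₁ : LinearOrder N₁) (i₂ : LinearOrder N₂)
    (c₁ : ι → Set N₁) (c₂ : ι → Set N₂),
    Countable N₁ → Countable N₂ →
    (letI := i₁; CLOTheory ι N₁ c₁) = T → (letI := i₂; CLOTheory ι N₂ c₂) = T →
    (letI := i₁; letI := i₂; CLOIso ι N₁ c₁ N₂ c₂)

/-- `φ` is a convex formula for the complete theory of the CLO `(M₀, c₀)`: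
its realizations in every model of that theory form a convex set. -/
def ConvexFml (ι : Type) (M₀ : Type) [LinearOrder M₀] (c₀ : ι → Set M₀)
    (φ : (CLOLang ι).Formula Unit) : Prop :=
  ∀ (B : Type) (iB : LinearOrder B) (cB : ι → Set B),
    (letI := iB; CLOEquiv ι B cB M₀ c₀) → (letI := iB; Set.OrdConnected (FmlSet ι B cB φ))

/-- The set of common realizations of a set of one-variable formulas in a CLO. -/
def TypeSet (ι : Type) (M : Type) [LinearOrder M] (c : ι → Set M)
    (Φ : Set ((CLOLang ι).Formula Unit)) : Set M :=
  {x | ∀ φ ∈ Φ, Sat M c φ fun _ => x}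

/-- A set of one-variable formulas is consistent with the complete theory of
`(M₀, c₀)`: it is realized in some model of that theory. -/
def TypeConsistent (ι : Type) (M₀ : Type) [LinearOrder M₀] (c₀ : ι → Set M₀)
    (Φ : Set ((CLOLang ι).Formula Unit)) : Prop :=
  ∃ (B : Type) (iB : LinearOrder B) (cB : ι → Set B),
    (letI := iB; CLOEquiv ι B cB M₀ c₀) ∧ (letI := iB; ∃ b : B, b ∈ TypeSet ι B cB Φ)

/-- `Φ` is a convex type of the complete theory of `(M₀, c₀)`: a maximal
consistent set of convex formulas over `∅`.  `IT(T)` is the set of all such. -/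
def IsConvexType (ι : Type) (M₀ : Type) [LinearOrder M₀] (c₀ : ι → Set M₀)
    (Φ : Set ((CLOLang ι).Formula Unit)) : Prop :=
  (∀ φ ∈ Φ, ConvexFml ι M₀ c₀ φ) ∧ TypeConsistent ι M₀ c₀ Φ ∧
    ∀ ψ, ConvexFml ι M₀ c₀ ψ → TypeConsistent ι M₀ c₀ (insert ψ Φ) → ψ ∈ Φ

/-- A convex type is isolated if it contains a convex formula contained in no
other convex type. -/
def IsolatedCT (ι : Type) (M₀ : Type) [LinearOrder M₀] (c₀ : ι → Set M₀)
    (Φ : Set ((CLOLang ι).Formula Unit)) : Prop :=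
  ∃ φ ∈ Φ, ConvexFml ι M₀ c₀ φ ∧
    ∀ Ψ, IsConvexType ι M₀ c₀ Ψ → φ ∈ Ψ → Ψ = Φ

/-- A CLO is ℵ₀-saturated: every finitely-satisfiable set of formulas in one
variable over finitely many parameters is realized. -/
def Aleph0Saturated (ι : Type) (S : Type) [LinearOrder S] (cS : ι → Set S) : Prop :=
  ∀ (m : ℕ) (a : Fin m → S) (p : Set ((CLOLang ι).Formula (Unit ⊕ Fin m))),
    (∀ q : Finset ((CLOLang ι).Formula (Unit ⊕ Fin m)), ↑q ⊆ p →
      ∃ x : S, ∀ φ ∈ q, Sat S cS φ (Sum.elim (fun _ => x) a)) →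
    ∃ x : S, ∀ φ ∈ p, Sat S cS φ (Sum.elim (fun _ => x) a)

/-- A CLO is strongly ℵ₀-homogeneous: finite tuples with the same complete type
are conjugate under an automorphism. -/
def StronglyAleph0Homogeneous (ι : Type) (S : Type) [LinearOrder S] (cS : ι → Set S) : Prop :=
  ∀ (m : ℕ) (a b : Fin m → S),
    (∀ φ : (CLOLang ι).Formula (Fin m), Sat S cS φ a ↔ Sat S cS φ b) →
    ∃ g : S ≃ S, (∀ x y : S, x < y ↔ g x < g y) ∧
      (∀ (k : ι) (x : S), x ∈ cS k ↔ g x ∈ cS k) ∧ ∀ i, g (a i) = b i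

/-- Sufficiently saturated: ℵ₀-saturated and strongly ℵ₀-homogeneous. -/
def SuffSaturated (ι : Type) (S : Type) [LinearOrder S] (cS : ι → Set S) : Prop :=
  Aleph0Saturated ι S cS ∧ StronglyAleph0Homogeneous ι S cS

/-- The complete theory of `(M₀, c₀)` is locally simple: for every sufficiently
saturated model `S` and every convex type `Φ`, the theory `T_Φ = Th(Φ(S))` is
ℵ₀-categorical. -/
def LocallySimple (ι : Type) (M₀ : Type) [LinearOrder M₀] (c₀ : ι → Set M₀) : Prop :=
  ∀ (S : Type) [LinearOrder S], ∀ (cS : ι → Set S),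
    CLOEquiv ι S cS M₀ c₀ → SuffSaturated ι S cS →
    ∀ Φ, IsConvexType ι M₀ c₀ Φ →
      Aleph0CatTheory ι
        (CLOTheory ι (TypeSet ι S cS Φ) (subColor cS (TypeSet ι S cS Φ)))

/-- A finite set of pairs is a partial isomorphism of CLOs: it preserves `<`,
equality, and each color, in both directions. -/
def IsPartialIso (ι : Type) {M N : Type} [LinearOrder M] [LinearOrder N]
    (cM : ι → Set M) (cN : ι → Set N) (f : Finset (M × N)) : Prop :=
  ∀ p ∈ f, ∀ q ∈ f,
    (p.1 < q.1 ↔ p.2 < q.2) ∧ (p.1 = q.1 ↔ p.2 = q.2) ∧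
    ∀ k, p.1 ∈ cM k ↔ p.2 ∈ cN k

/-- Back-and-forth equivalence of CLOs: a nonempty family of finite partial
isomorphisms with the back-and-forth extension properties. -/
def BackForthEquiv (ι : Type) (M : Type) [LinearOrder M] (cM : ι → Set M)
    (N : Type) [LinearOrder N] (cN : ι → Set N) : Prop :=
  ∃ F : Set (Finset (M × N)), F.Nonempty ∧ (∀ f ∈ F, IsPartialIso ι cM cN f) ∧
    (∀ f ∈ F, ∀ m : M, ∃ g ∈ F, f ⊆ g ∧ ∃ n : N, (m, n) ∈ g) ∧
    (∀ f ∈ F, ∀ n : N, ∃ g ∈ F, f ⊆ g ∧ ∃ m : M, (m, n) ∈ g)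

/-- The set of complete theories `Th(Φ(A))` as `A` ranges over models of the
complete theory of `(M₀, c₀)` (including the theory of the empty structure,
in case `Φ` is omitted). -/
def TheoriesAt (ι : Type) (M₀ : Type) [LinearOrder M₀] (c₀ : ι → Set M₀)
    (Φ : Set ((CLOLang ι).Formula Unit)) : Set ((CLOLang ι).Theory) :=
  {T | ∃ (A : Type) (iA : LinearOrder A) (cA : ι → Set A),
    (letI := iA; CLOEquiv ι A cA M₀ c₀) ∧
    T = (letI := iA; CLOTheory ι (TypeSet ι A cA Φ) (subColor cA (TypeSet ι A cA Φ)))}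

section SaturatedModel

variable {L : FirstOrder.Language.{0, 0}}

/-- If every formula true of `a` is true of `b`, then every formula satisfied by an extension
of `a` is satisfied by some extension of `b`. -/
theorem exists_realize_extend {M N X Y : Type} [L.Structure M] [L.Structure N]
    [Nonempty N] {a : X → M} {b : X → N}
    (hab : ∀ χ : L.Formula X, χ.Realize a → χ.Realize b)
    (ψ : L.Formula (X ⊕ Y)) (c : Y → M) (h : ψ.Realize (Sum.elim a c)) :
    ∃ d : Y → N, ψ.Realize (Sum.elim b d) := by
  classical
  let V : Finset Y := ψ.freeVarFinset.preimage Sum.inr Sum.inr_injective.injOn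
  have hV : ∀ y, Sum.inr y ∈ ψ.freeVarFinset → y ∈ V := fun y hy => by simpa [V] using hy
  let f : ψ.freeVarFinset → X ⊕ V := fun z =>
    match z with
    | ⟨Sum.inl x, _⟩ => Sum.inl x
    | ⟨Sum.inr y, hy⟩ => Sum.inr ⟨y, hV y hy⟩
  let ψ' : L.Formula (X ⊕ V) := BoundedFormula.restrictFreeVar ψ f
  have h1 : (ψ'.iExs V).Realize a := by
    rw [Formula.realize_iExs]
    refine ⟨fun y => c y, ?_⟩
    refine (BoundedFormula.realize_restrictFreeVar (Sum.elim a c) ?_).2 h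
    rintro ⟨x | y, hz⟩ <;> rfl
  obtain ⟨d, hd⟩ := Formula.realize_iExs.1 (hab _ h1)
  refine ⟨fun y => if hy : y ∈ V then d ⟨y, hy⟩ else Classical.arbitrary N, ?_⟩
  refine (BoundedFormula.realize_restrictFreeVar (f := f) (v := Sum.elim b d) _ ?_).1 hd
  rintro ⟨x | y, hz⟩
  · rfl
  · simp [f, hV y hz]

/-- Every nonempty structure has an elementary extension realizing all sets of formulas over it
(in as many variables as it has elements) that are finitely satisfiable in it. -/
theorem exists_realizing_extension (M : Type) [L.Structure M] [Nonempty M] :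
    ∃ (N : Type) (_ : L.Structure N) (_ : Nonempty N) (j : M ↪ₑ[L] N),
      ∀ p : Set (L.Formula (M ⊕ M)),
        (∀ q : Finset (L.Formula (M ⊕ M)), ↑q ⊆ p →
          ∃ x : M → M, ∀ φ ∈ q, φ.Realize (Sum.elim x id)) →
        ∃ x : M → N, ∀ φ ∈ p, φ.Realize (Sum.elim x j) := by
  classical
  let I := Finset (L.Formula (M ⊕ M))
  let u : Ultrafilter I := Ultrafilter.of Filter.atTop
  let N := (u : Filter I).Product fun _ => M
  let diag : M → N := fun m => ((fun _ => m : I → M) : N)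
  refine ⟨N, inferInstance, inferInstance, ⟨diag, ?_⟩, ?_⟩
  · intro n φ x
    refine (Ultraproduct.realize_formula_cast (u := u) φ fun i _ => x i).trans ?_
    exact Filter.eventually_const
  · intro p hp
    have hx : ∀ i : I, ∃ x : M → M, ∀ φ ∈ i.filter (· ∈ p), φ.Realize (Sum.elim x id) :=
      fun i => hp _ fun φ hφ => (Finset.mem_filter.1 hφ).2
    choose x hx using hx
    refine ⟨fun m => ((fun i => x i m : I → M) : N), fun φ hφ => ?_⟩
    have key := Ultraproduct.realize_formula_cast (u := u) φ
      (Sum.elim (fun m i => x i m) fun m _ => m : M ⊕ M → I → M)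
    have e1 : (fun i => ((Sum.elim (fun m i => x i m) (fun m _ => m) i : I → M) : N)) =
        Sum.elim (fun m => ((fun i => x i m : I → M) : N)) diag := by
      ext (m | m) <;> rfl
    rw [e1] at key
    refine key.2 ?_
    have hle : (u : Filter I) ≤ Filter.atTop := Ultrafilter.of_le _
    filter_upwards [hle (Filter.mem_atTop ({φ} : I))] with i hi
    have e2 : (fun k => (Sum.elim (fun m i => x i m) (fun m _ => m) k : I → M) i) =
        Sum.elim (x i) id := by
      ext (m | m) <;> rfl
    rw [e2]
    exact hx i φ (Finset.mem_filter.2 ⟨hi (Finset.mem_singleton_self φ), hφ⟩)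

/-- A nonempty structure, bundled. -/
structure NonemptyStr (L : FirstOrder.Language.{0, 0}) where
  carrier : Type
  [str : L.Structure carrier]
  [nonempty : Nonempty carrier]

attribute [instance] NonemptyStr.str NonemptyStr.nonempty

/-- An elementary extension as given by `exists_realizing_extension`. -/
noncomputable def NonemptyStr.next (M : NonemptyStr L) : NonemptyStr L :=
  letI := (exists_realizing_extension (L := L) M.carrier).choose_spec.choose
  haveI := (exists_realizing_extension (L := L) M.carrier).choose_spec.choose_spec.choose
  ⟨(exists_realizing_extension (L := L) M.carrier).choose⟩

/-- The embedding into the next stage. -/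
noncomputable def NonemptyStr.emb (M : NonemptyStr L) : M.carrier ↪ₑ[L] M.next.carrier :=
  (exists_realizing_extension (L := L) M.carrier).choose_spec.choose_spec.choose_spec.choose

theorem NonemptyStr.emb_realizes (M : NonemptyStr L) (p : Set (L.Formula (M.carrier ⊕ M.carrier)))
    (hp : ∀ q : Finset (L.Formula (M.carrier ⊕ M.carrier)), ↑q ⊆ p →
      ∃ x : M.carrier → M.carrier, ∀ φ ∈ q, φ.Realize (Sum.elim x id)) :
    ∃ x : M.carrier → M.next.carrier, ∀ φ ∈ p, φ.Realize (Sum.elim x M.emb) :=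
  (exists_realizing_extension (L := L)
    M.carrier).choose_spec.choose_spec.choose_spec.choose_spec p hp

/-- The iterated extensions of a structure. -/
noncomputable def NonemptyStr.stage (M : NonemptyStr L) : ℕ → NonemptyStr L
  | 0 => M
  | n + 1 => (M.stage n).next

/-- The union of an elementary chain is an elementary extension of each member. -/
theorem realize_of_directLimit {G : ℕ → Type} [∀ n, L.Structure (G n)]
    (f : ∀ i j, i ≤ j → G i ↪[L] G j) [DirectedSystem G fun i j h => f i j h]
    (hf : ∀ i j h {α : Type} {n : ℕ} (φ : L.BoundedFormula α n) (v : α → G i) (xs : Fin n → G i),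
      φ.Realize (f i j h ∘ v) (f i j h ∘ xs) ↔ φ.Realize v xs)
    {α : Type} {n : ℕ} (φ : L.BoundedFormula α n) :
    ∀ (i : ℕ) (v : α → G i) (xs : Fin n → G i),
      φ.Realize (DirectLimit.of L ℕ G f i ∘ v) (DirectLimit.of L ℕ G f i ∘ xs) ↔
        φ.Realize v xs := by
  induction φ with
  | falsum => intros; rfl
  | equal =>
    intro i v xs
    simp only [BoundedFormula.Realize, ← Sum.comp_elim, HomClass.realize_term]
    exact (DirectLimit.of L ℕ G f i).injective.eq_iff
  | rel R ts =>
    intro i v xs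
    simp only [BoundedFormula.Realize, ← Sum.comp_elim, HomClass.realize_term]
    exact (DirectLimit.of L ℕ G f i).map_rel R _
  | imp _ _ ih1 ih2 => intro i v xs; simp only [BoundedFormula.Realize, ih1, ih2]
  | all φ ih =>
    intro i v xs
    simp only [BoundedFormula.realize_all]
    constructor
    · intro h a
      have := h (DirectLimit.of L ℕ G f i a)
      rwa [← Fin.comp_snoc, ih] at this
    · intro h a
      obtain ⟨k, y, rfl⟩ := DirectLimit.exists_of a
      let j := max i k
      have hik : i ≤ j := le_max_left _ _
      have e : ∀ {β : Type} (w : β → G i), DirectLimit.of L ℕ G f i ∘ w =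
          DirectLimit.of L ℕ G f j ∘ f i j hik ∘ w := by
        intro β w; ext b; simp only [Function.comp_apply]; rw [DirectLimit.of_f]
      rw [← DirectLimit.of_f (hij := (le_max_right i k : k ≤ j)), e v, e xs, ← Fin.comp_snoc, ih]
      exact (hf i j hik φ.all v xs).2 h _

namespace NonemptyStr

variable (M : NonemptyStr L)

/-- The embedding of a stage into the next one. -/
noncomputable def stepEmb (n : ℕ) : (M.stage n).carrier ↪ₑ[L] (M.stage (n + 1)).carrier :=
  (M.stage n).emb

theorem stepEmb_realizes (n : ℕ)
    (p : Set (L.Formula ((M.stage n).carrier ⊕ (M.stage n).carrier)))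
    (hp : ∀ q : Finset (L.Formula ((M.stage n).carrier ⊕ (M.stage n).carrier)), ↑q ⊆ p →
      ∃ x : (M.stage n).carrier → (M.stage n).carrier, ∀ φ ∈ q, φ.Realize (Sum.elim x id)) :
    ∃ x : (M.stage n).carrier → (M.stage (n + 1)).carrier,
      ∀ φ ∈ p, φ.Realize (Sum.elim x (M.stepEmb n)) :=
  (M.stage n).emb_realizes p hp

/-- The embeddings between the stages. -/
noncomputable def stageEmb (i j : ℕ) (h : i ≤ j) :
    (M.stage i).carrier ↪[L] (M.stage j).carrier :=
  DirectedSystem.natLERec (G' := fun n => (M.stage n).carrier)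
    (fun n => (M.stepEmb n).toEmbedding) i j h

noncomputable instance : DirectedSystem (fun n => (M.stage n).carrier)
    fun i j h => M.stageEmb i j h :=
  DirectedSystem.natLERec.directedSystem (G' := fun n => (M.stage n).carrier)
    (fun n => (M.stepEmb n).toEmbedding)

theorem stageEmb_succ (n : ℕ) (x : (M.stage n).carrier) :
    M.stageEmb n (n + 1) n.le_succ x = M.stepEmb n x := by
  rw [stageEmb, DirectedSystem.coe_natLERec]
  exact Nat.leRecOn_succ' (C := fun n => (M.stage n).carrier) x

theorem realize_stageEmb (i j : ℕ) (h : i ≤ j) {α : Type} {n : ℕ} (φ : L.BoundedFormula α n)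
    (v : α → (M.stage i).carrier) (xs : Fin n → (M.stage i).carrier) :
    φ.Realize (M.stageEmb i j h ∘ v) (M.stageEmb i j h ∘ xs) ↔ φ.Realize v xs := by
  induction j, h using Nat.le_induction with
  | base =>
    have e : ⇑(M.stageEmb i i le_rfl) = id := by
      ext x
      exact DirectedSystem.map_self (f := fun i j h => M.stageEmb i j h) x
    rw [e]; rfl
  | succ j h ih =>
    have e : ⇑(M.stageEmb i (j + 1) (h.trans j.le_succ)) =
        M.stepEmb j ∘ M.stageEmb i j h := by
      ext x
      rw [Function.comp_apply, ← stageEmb_succ]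
      exact (DirectedSystem.map_map (f := fun i j h => M.stageEmb i j h) h j.le_succ x).symm
    rw [e, Function.comp_assoc, Function.comp_assoc]
    exact ((M.stepEmb j).map_boundedFormula φ _ _).trans ih

/-- The union of the stages. -/
def Limit : Type := Language.DirectLimit (fun n => (M.stage n).carrier) M.stageEmb

noncomputable instance : L.Structure M.Limit :=
  inferInstanceAs (L.Structure (Language.DirectLimit (fun n => (M.stage n).carrier) M.stageEmb))

/-- The inclusion of a stage in the union. -/
noncomputable def incl (n : ℕ) : (M.stage n).carrier → M.Limit :=
  DirectLimit.of L ℕ (fun n => (M.stage n).carrier) M.stageEmb n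

theorem realize_incl {α : Type} (n : ℕ) (φ : L.Formula α) (v : α → (M.stage n).carrier) :
    φ.Realize (M.incl n ∘ v) ↔ φ.Realize v := by
  have := realize_of_directLimit M.stageEmb M.realize_stageEmb φ n v default
  rw [Formula.Realize, Formula.Realize, ← this]
  exact iff_of_eq (congrArg _ (Subsingleton.elim _ _))

theorem incl_emb (n : ℕ) (x : (M.stage n).carrier) :
    M.incl (n + 1) (M.stepEmb n x) = M.incl n x := by
  rw [← stageEmb_succ]
  exact Language.DirectLimit.of_f (G := fun n => (M.stage n).carrier) (f := M.stageEmb)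

theorem range_incl_mono : Monotone fun n => range (M.incl n) := by
  refine monotone_nat_of_le_succ fun n => ?_
  rintro _ ⟨x, rfl⟩
  exact ⟨_, M.incl_emb n x⟩

theorem exists_mem_range_incl (x : M.Limit) : ∃ n, x ∈ range (M.incl n) :=
  DirectLimit.exists_of (G := fun n => (M.stage n).carrier) (f := M.stageEmb) x

theorem limit_equiv : M.Limit ≅[L] M.carrier := by
  rw [elementarilyEquivalent_iff]
  intro φ
  rw [Sentence.Realize, Sentence.Realize]
  have := M.realize_incl 0 φ default
  refine Iff.trans ?_ this
  exact iff_of_eq (congrArg _ (Subsingleton.elim _ _))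

/-- The union of the stages is `ℵ₀`-saturated. -/
theorem limit_saturated {m : ℕ} (a : Fin m → M.Limit) (p : Set (L.Formula (Unit ⊕ Fin m)))
    (hp : ∀ q : Finset (L.Formula (Unit ⊕ Fin m)), ↑q ⊆ p →
      ∃ x : M.Limit, ∀ φ ∈ q, φ.Realize (Sum.elim (fun _ => x) a)) :
    ∃ x : M.Limit, ∀ φ ∈ p, φ.Realize (Sum.elim (fun _ => x) a) := by
  classical
  choose k hk using fun i => M.exists_mem_range_incl (a i)
  let n := Finset.univ.sup k
  choose a' ha' using fun i => M.range_incl_mono (Finset.le_sup (f := k) (Finset.mem_univ i)) (hk i)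
  have ha : a = M.incl n ∘ a' := funext fun i => (ha' i).symm
  let m₀ : (M.stage n).carrier := Classical.arbitrary _
  let r : Unit ⊕ Fin m → (M.stage n).carrier ⊕ (M.stage n).carrier :=
    Sum.map (fun _ => m₀) a'
  obtain ⟨x, hx⟩ := M.stepEmb_realizes n ((fun φ => φ.relabel r) '' p) (by
    intro q hq
    obtain ⟨q', hq', rfl⟩ := Finset.subset_set_image_iff.1 hq
    obtain ⟨x, hx⟩ := hp q' hq'
    obtain ⟨d, hd⟩ := exists_realize_extend (L := L) (a := a) (b := a') (Y := Unit)
      (fun χ h => by rwa [ha, realize_incl] at h)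
      (Formula.iInf fun φ : q' => φ.1.relabel Sum.swap) (fun _ => x) (by
        simp only [Formula.realize_iInf, Formula.realize_relabel]
        intro φ
        convert hx _ φ.2 using 1
        ext (i | i) <;> rfl)
    simp only [Formula.realize_iInf, Formula.realize_relabel] at hd
    refine ⟨fun _ => d (), ?_⟩
    simp only [Finset.mem_image, forall_exists_index, and_imp, forall_apply_eq_imp_iff₂,
      Formula.realize_relabel]
    intro φ hφ
    convert hd ⟨φ, hφ⟩ using 1
    ext (i | i) <;> rfl)
  refine ⟨M.incl (n + 1) (x m₀), fun φ hφ => ?_⟩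
  have := (M.realize_incl (n + 1) _ _).2 (hx _ ⟨φ, hφ, rfl⟩)
  rw [Formula.realize_relabel] at this
  convert this using 1
  ext (i | i)
  · rfl
  · exact (congrFun ha i).trans (M.incl_emb n _).symm

/-- A binary relation on the union of the stages is elementary if each formula holding of the
first components of a family of its members holds of the second components. -/
def ElemRel (R : Set (M.Limit × M.Limit)) : Prop :=
  ∀ χ : L.Formula R, χ.Realize (fun r => r.1.1) ↔ χ.Realize (fun r => r.1.2)

variable {M}

theorem elemRel_range {X : Type} {a b : X → M.Limit}
    (h : ∀ χ : L.Formula X, χ.Realize a → χ.Realize b) :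
    M.ElemRel (range fun x => (a x, b x)) := by
  intro χ
  have h' : ∀ χ : L.Formula X, χ.Realize a ↔ χ.Realize b :=
    fun χ => ⟨h χ, fun hb => by_contra fun ha => h χ.not ha hb⟩
  choose s hs using fun r : range fun x => (a x, b x) => r.2
  have := h' (χ.relabel s)
  rw [Formula.realize_relabel, Formula.realize_relabel] at this
  convert this using 2 <;> ext r
  · exact congrArg Prod.fst (hs r).symm
  · exact congrArg Prod.snd (hs r).symm

theorem ElemRel.realize {R : Set (M.Limit × M.Limit)} (h : M.ElemRel R) {X : Type}
    {a b : X → M.Limit} (hR : ∀ x, (a x, b x) ∈ R) (χ : L.Formula X) :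
    χ.Realize a ↔ χ.Realize b := by
  have := h (χ.relabel fun x => ⟨_, hR x⟩)
  rwa [Formula.realize_relabel, Formula.realize_relabel] at this

theorem ElemRel.swap {R : Set (M.Limit × M.Limit)} (h : M.ElemRel R) :
    M.ElemRel (Prod.swap ⁻¹' R) := by
  intro χ
  have := h (χ.relabel fun r => ⟨_, r.2⟩)
  rw [Formula.realize_relabel, Formula.realize_relabel] at this
  exact this.symm

/-- An elementary relation between elements of one stage extends to an elementary relation
between elements of the next stage which is defined on the entire given stage. -/
theorem ElemRel.extend {R : Set (M.Limit × M.Limit)} (h : M.ElemRel R) {n : ℕ}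
    (hn : R ⊆ range (M.incl n) ×ˢ range (M.incl n)) :
    ∃ R', M.ElemRel R' ∧ R ⊆ R' ∧ R' ⊆ range (M.incl (n + 1)) ×ˢ range (M.incl (n + 1)) ∧
      ∀ x ∈ range (M.incl n), ∃ y, (x, y) ∈ R' := by
  classical
  choose a ha using fun r : R => (hn r.2).1
  choose b hb using fun r : R => (hn r.2).2
  have hab : ∀ χ : L.Formula R, χ.Realize a → χ.Realize b := by
    intro χ hχ
    rw [← realize_incl] at hχ ⊢
    rw [show M.incl n ∘ a = _ from funext ha] at hχ
    rw [show M.incl n ∘ b = _ from funext hb]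
    exact (h χ).1 hχ
  let r : R ⊕ (M.stage n).carrier → (M.stage n).carrier ⊕ (M.stage n).carrier :=
    Sum.elim (fun x => Sum.inr (b x)) Sum.inl
  obtain ⟨d, hd⟩ := M.stepEmb_realizes n
    ((fun φ => φ.relabel r) ''
      {φ : L.Formula (R ⊕ (M.stage n).carrier) | φ.Realize (Sum.elim a id)}) (by
      intro q hq
      obtain ⟨q', hq', rfl⟩ := Finset.subset_set_image_iff.1 hq
      obtain ⟨d, hd⟩ := exists_realize_extend (L := L) hab
        (Formula.iInf fun φ : q' => φ.1) id (Formula.realize_iInf.2 fun φ => hq' φ.2)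
      rw [Formula.realize_iInf] at hd
      refine ⟨d, ?_⟩
      simp only [Finset.mem_image, forall_exists_index, and_imp, forall_apply_eq_imp_iff₂,
        Formula.realize_relabel]
      intro φ hφ
      convert hd ⟨φ, hφ⟩ using 1
      ext (i | i) <;> rfl)
  let a₁ : R ⊕ (M.stage n).carrier → M.Limit := M.incl n ∘ Sum.elim a id
  let b₁ : R ⊕ (M.stage n).carrier → M.Limit :=
    M.incl (n + 1) ∘ Sum.elim (M.stepEmb n ∘ b) d
  refine ⟨range fun x => (a₁ x, b₁ x), elemRel_range ?_, ?_, ?_, ?_⟩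
  · intro χ hχ
    rw [realize_incl] at hχ ⊢
    have := hd _ ⟨χ, hχ, rfl⟩
    rw [Formula.realize_relabel] at this
    convert this using 1
    ext (i | i) <;> rfl
  · intro p hp
    refine ⟨Sum.inl ⟨p, hp⟩, Prod.ext (ha ⟨p, hp⟩) ?_⟩
    exact (M.incl_emb n _).trans (hb ⟨p, hp⟩)
  · rintro _ ⟨x, rfl⟩
    exact ⟨M.range_incl_mono n.le_succ ⟨_, rfl⟩, ⟨_, rfl⟩⟩
  · rintro _ ⟨x, rfl⟩
    exact ⟨_, ⟨Sum.inr x, rfl⟩⟩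

theorem ElemRel.extend_both {R : Set (M.Limit × M.Limit)} (h : M.ElemRel R) {n : ℕ}
    (hn : R ⊆ range (M.incl n) ×ˢ range (M.incl n)) :
    ∃ R', M.ElemRel R' ∧ R ⊆ R' ∧ R' ⊆ range (M.incl (n + 2)) ×ˢ range (M.incl (n + 2)) ∧
      ∀ x ∈ range (M.incl n), (∃ y, (x, y) ∈ R') ∧ ∃ y, (y, x) ∈ R' := by
  obtain ⟨R₁, h₁, hR₁, hn₁, hd₁⟩ := h.extend hn
  obtain ⟨R₂, h₂, hR₂, hn₂, hd₂⟩ := h₁.swap.extend fun p hp => (hn₁ hp).symm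
  refine ⟨Prod.swap ⁻¹' R₂, h₂.swap, fun p hp => hR₂ (hR₁ hp), fun p hp => (hn₂ hp).symm,
    fun x hx => ⟨?_, ?_⟩⟩
  · obtain ⟨y, hy⟩ := hd₁ x hx
    exact ⟨y, hR₂ hy⟩
  · exact hd₂ x (M.range_incl_mono n.le_succ hx)

/-- The union of the stages is strongly `ℵ₀`-homogeneous. -/
theorem limit_homogeneous {m : ℕ} (a b : Fin m → M.Limit)
    (hab : ∀ φ : L.Formula (Fin m), φ.Realize a ↔ φ.Realize b) :
    ∃ g : M.Limit ≃ M.Limit, (∀ (φ : L.Formula (Fin 2)) (x y : M.Limit),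
      φ.Realize ![x, y] ↔ φ.Realize ![g x, g y]) ∧ ∀ i, g (a i) = b i := by
  classical
  choose k hk using fun x => M.exists_mem_range_incl x
  let n₀ := max (Finset.univ.sup (k ∘ a)) (Finset.univ.sup (k ∘ b))
  let State := {s : ℕ × Set (M.Limit × M.Limit) //
    M.ElemRel s.2 ∧ s.2 ⊆ range (M.incl s.1) ×ˢ range (M.incl s.1)}
  let s₀ : State := ⟨(n₀, range fun i => (a i, b i)), elemRel_range fun χ => (hab χ).1, by
    rintro _ ⟨i, rfl⟩
    exact ⟨M.range_incl_mono ((Finset.le_sup (f := k ∘ a) (Finset.mem_univ i)).trans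
        (le_max_left _ _)) (hk _),
      M.range_incl_mono ((Finset.le_sup (f := k ∘ b) (Finset.mem_univ i)).trans
        (le_max_right _ _)) (hk _)⟩⟩
  have step : ∀ s : State, ∃ t : State, t.1.1 = s.1.1 + 2 ∧ s.1.2 ⊆ t.1.2 ∧
      ∀ x ∈ range (M.incl s.1.1), (∃ y, (x, y) ∈ t.1.2) ∧ ∃ y, (y, x) ∈ t.1.2 := by
    rintro ⟨⟨n, R⟩, h, hn⟩
    obtain ⟨R', h', hR, hn', hd⟩ := h.extend_both hn
    exact ⟨⟨(n + 2, R'), h', hn'⟩, rfl, hR, hd⟩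
  choose next hnext using step
  let s : ℕ → State := fun i => next^[i] s₀
  have hs : ∀ i, s (i + 1) = next (s i) := fun i => Function.iterate_succ_apply' next i s₀
  have hmono : Monotone fun i => (s i).1.2 := by
    refine monotone_nat_of_le_succ fun i => ?_
    rw [hs]
    exact (hnext (s i)).2.1
  have hlevel : ∀ i, i ≤ (s i).1.1 := by
    intro i
    induction i with
    | zero => exact Nat.zero_le _
    | succ i ih => rw [hs, (hnext (s i)).1]; omega
  have htotal : ∀ x, (∃ y i, (x, y) ∈ (s i).1.2) ∧ ∃ y i, (y, x) ∈ (s i).1.2 := by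
    intro x
    obtain ⟨⟨y, hy⟩, z, hz⟩ := (hnext (s (k x))).2.2 x (M.range_incl_mono (hlevel _) (hk x))
    rw [← hs] at hy hz
    exact ⟨⟨y, _, hy⟩, z, _, hz⟩
  have hpres : ∀ {x x' y y' i j}, (x, x') ∈ (s i).1.2 → (y, y') ∈ (s j).1.2 →
      ∀ φ : L.Formula (Fin 2), φ.Realize ![x, y] ↔ φ.Realize ![x', y'] := by
    intro x x' y y' i j hx hy φ
    refine (s (max i j)).2.1.realize ?_ φ
    intro l
    fin_cases l
    · exact hmono (le_max_left i j) hx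
    · exact hmono (le_max_right i j) hy
  have heq : ∀ {x x' y y' i j}, (x, x') ∈ (s i).1.2 → (y, y') ∈ (s j).1.2 →
      (x = y ↔ x' = y') := by
    intro x x' y y' i j hx hy
    simpa using hpres hx hy ((var 0).equal (var 1))
  choose g hg using fun x => (htotal x).1
  choose g' hg' using fun x => (htotal x).2
  choose i hg using hg
  choose i' hg' using hg'
  refine ⟨⟨g, g', fun x => (heq (hg' (g x)) (hg x)).2 rfl,
    fun x => (heq (hg (g' x)) (hg' x)).1 rfl⟩, fun φ x y => hpres (hg x) (hg y) φ, fun l => ?_⟩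
  have h0 : (a l, b l) ∈ (s 0).1.2 := ⟨l, rfl⟩
  exact (heq (hg (a l)) h0).1 rfl

end NonemptyStr

end SaturatedModel

section ColoredOrders

theorem realize_of_forall_realize {L : FirstOrder.Language.{0, 0}} {M N X : Type} [L.Structure M]
    [L.Structure N] [Finite X] (h : N ≅[L] M) (φ : L.Formula X)
    (hφ : ∀ v : X → M, φ.Realize v) (v : X → N) : φ.Realize v := by
  let σ : L.Sentence := (φ.relabel (Sum.inr : X → Empty ⊕ X)).iAlls X
  have hσ : M ⊨ σ := by
    rw [Sentence.Realize, Formula.realize_iAlls]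
    intro w
    rw [Formula.realize_relabel]
    exact hφ _
  rw [← (elementarilyEquivalent_iff.1 h) σ, Sentence.Realize, Formula.realize_iAlls] at hσ
  have := hσ v
  rwa [Formula.realize_relabel] at this

/-- The formula `x_s < x_t`. -/
def ltFml {ι α : Type} (s t : α) : (CLOLang ι).Formula α :=
  Relations.formula₂ (L := CLOLang ι) (CLORel.lt : CLORel ι 2) (var s) (var t)

/-- The formula stating that `x_s` has color `k`. -/
def colorFml {ι α : Type} (k : ι) (s : α) : (CLOLang ι).Formula α :=
  Relations.formula₁ (L := CLOLang ι) (CLORel.color k : CLORel ι 1) (var s)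

theorem realize_ltFml {ι α M : Type} [(CLOLang ι).Structure M] (s t : α) (v : α → M) :
    (ltFml (ι := ι) s t).Realize v ↔
      Structure.RelMap (L := CLOLang ι) (CLORel.lt : CLORel ι 2) ![v s, v t] :=
  Formula.realize_rel₂

theorem realize_colorFml {ι α M : Type} [(CLOLang ι).Structure M] (k : ι) (s : α) (v : α → M) :
    (colorFml k s).Realize v ↔
      Structure.RelMap (L := CLOLang ι) (CLORel.color k : CLORel ι 1) ![v s] :=
  Formula.realize_rel₁

theorem sat_ltFml {ι α M : Type} [LinearOrder M] (c : ι → Set M) (s t : α) (v : α → M) :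
    Sat M c (ltFml s t) v ↔ v s < v t :=
  @realize_ltFml ι α M (CLOStr ι M c) s t v

theorem sat_colorFml {ι α M : Type} [LinearOrder M] (c : ι → Set M) (k : ι) (s : α) (v : α → M) :
    Sat M c (colorFml k s) v ↔ v s ∈ c k :=
  @realize_colorFml ι α M (CLOStr ι M c) k s v

/-- A structure elementarily equivalent to a colored linear order is a colored linear order. -/
theorem exists_cloStr_eq {ι M N : Type} [LinearOrder M] (c : ι → Set M)
    (str : (CLOLang ι).Structure N)
    (h : letI := CLOStr ι M c; N ≅[CLOLang ι] M) :
    ∃ (_ : LinearOrder N) (cN : ι → Set N), CLOStr ι N cN = str := by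
  classical
  let := CLOStr ι M c
  let r : N → N → Prop := fun x y => (ltFml (ι := ι) (0 : Fin 2) 1).Realize ![x, y]
  have hr : ∀ x y, r x y ↔ Structure.RelMap (L := CLOLang ι) (CLORel.lt : CLORel ι 2) ![x, y] :=
    fun x y => realize_ltFml _ _ _
  have hirr : ∀ x, ¬ r x x := fun x => by
    have := realize_of_forall_realize h (ltFml (0 : Fin 1) 0).not
      (fun v => by
        rw [Formula.realize_not]
        exact fun hv => lt_irrefl _ ((sat_ltFml c 0 0 v).1 hv)) ![x]
    rwa [Formula.realize_not, realize_ltFml, ← hr] at this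
  have htrans : ∀ x y z, r x y → r y z → r x z := fun x y z => by
    have := realize_of_forall_realize h
      ((ltFml (0 : Fin 3) 1).imp ((ltFml 1 2).imp (ltFml 0 2)))
      (fun v => by
        simp only [Formula.realize_imp]
        exact fun h1 h2 => (sat_ltFml c 0 2 v).2
          (((sat_ltFml c 0 1 v).1 h1).trans ((sat_ltFml c 1 2 v).1 h2))) ![x, y, z]
    simp only [Formula.realize_imp, realize_ltFml, ← hr] at this
    exact this
  have htri : ∀ x y, ¬ r x y → ¬ r y x → x = y := fun x y => by
    have := realize_of_forall_realize h
      ((ltFml (0 : Fin 2) 1).not.imp ((ltFml 1 0).not.imp ((var 0).equal (var 1))))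
      (fun v => by
        simp only [Formula.realize_imp, Formula.realize_not, Formula.realize_equal,
          Term.realize_var]
        exact fun h1 h2 => le_antisymm (not_lt.1 fun h => h2 ((sat_ltFml c 1 0 v).2 h))
          (not_lt.1 fun h => h1 ((sat_ltFml c 0 1 v).2 h))) ![x, y]
    simp only [Formula.realize_imp, Formula.realize_not, Formula.realize_equal,
      Term.realize_var, realize_ltFml, ← hr] at this
    exact this
  let lo : LinearOrder N :=
    { le := fun x y => ¬ r y x
      lt := r
      le_refl := hirr
      le_trans := fun x y z h1 h2 h3 => by
        by_cases hxy : r x y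
        · exact h2 (htrans z x y h3 hxy)
        · exact h2 (htri x y hxy h1 ▸ h3)
      lt_iff_le_not_ge := fun x y =>
        ⟨fun h1 => ⟨fun h2 => hirr x (htrans x y x h1 h2), not_not.2 h1⟩, fun h1 => not_not.1 h1.2⟩
      le_antisymm := fun x y h1 h2 => htri x y h2 h1
      le_total := fun x y => by
        by_contra hc
        rw [not_or, not_not, not_not] at hc
        exact hirr x (htrans x y x hc.2 hc.1)
      toDecidableLE := Classical.decRel _ }
  refine ⟨lo, fun k => {x | Structure.RelMap (L := CLOLang ι) (CLORel.color k : CLORel ι 1) ![x]},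
    ?_⟩
  refine Structure.ext ?_ ?_
  · funext n f
    exact Empty.elim f
  · funext n R v
    cases R with
    | lt =>
      have hv : v = ![v 0, v 1] := by ext i; fin_cases i <;> rfl
      refine Eq.trans (propext (hr (v 0) (v 1))) ?_
      rw [← hv]
    | color k =>
      have hv : v = ![v 0] := by ext i; fin_cases i; rfl
      change Structure.RelMap (L := CLOLang ι) (CLORel.color k : CLORel ι 1) ![v 0] = _
      rw [← hv]

theorem exists_suffSaturated {ι M : Type} [LinearOrder M] (c : ι → Set M) :
    ∃ (S : Type) (_ : LinearOrder S) (cS : ι → Set S),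
      CLOEquiv ι S cS M c ∧ SuffSaturated ι S cS := by
  rcases isEmpty_or_nonempty M with hM | hM
  · exact ⟨M, _, c, rfl, fun m a p hp => ((hp ∅ (by simp)).elim fun x _ => hM.elim x),
      fun m a b _ => ⟨Equiv.refl M, fun x => hM.elim x, fun _ x => hM.elim x,
        fun i => hM.elim (a i)⟩⟩
  let := CLOStr ι M c
  let N : NonemptyStr (CLOLang ι) := ⟨M⟩
  obtain ⟨lo, cS, hS⟩ := exists_cloStr_eq c _ N.limit_equiv
  have hSat : ∀ {α : Type} (φ : (CLOLang ι).Formula α) (v : α → N.Limit),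
      Sat N.Limit cS φ v ↔ φ.Realize v := fun φ v => by rw [Sat, hS]
  refine ⟨N.Limit, lo, cS, ?_, ?_, ?_⟩
  · rw [CLOEquiv, hS]
    exact N.limit_equiv
  · intro m a p
    simp only [hSat]
    exact N.limit_saturated a p
  · intro m a b hab
    simp only [hSat] at hab
    obtain ⟨g, hg, hga⟩ := NonemptyStr.limit_homogeneous a b hab
    simp only [← hSat] at hg
    refine ⟨g, fun x y => ?_, fun k x => ?_, hga⟩
    · simpa using ((sat_ltFml cS (0 : Fin 2) 1 _).symm.trans (hg (ltFml 0 1) x y)).trans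
        (sat_ltFml cS 0 1 _)
    · simpa using ((sat_colorFml cS k (0 : Fin 2) _).symm.trans (hg (colorFml k 0) x x)).trans
        (sat_colorFml cS k 0 _)

theorem CLOIso_iff {ι M N : Type} [LinearOrder M] [LinearOrder N] (cM : ι → Set M)
    (cN : ι → Set N) :
    CLOIso ι M cM N cN ↔ ∃ g : M ≃ N, (∀ x y : M, x < y ↔ g x < g y) ∧
      ∀ (k : ι) (x : M), x ∈ cM k ↔ g x ∈ cN k := by
  let := CLOStr ι M cM
  let := CLOStr ι N cN
  constructor
  · rintro ⟨g⟩
    refine ⟨g.toEquiv, fun x y => ?_, fun k x => ?_⟩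
    · exact (g.map_rel (CLORel.lt : CLORel ι 2) ![x, y]).symm
    · exact (g.map_rel (CLORel.color k : CLORel ι 1) ![x]).symm
  · rintro ⟨g, hlt, hc⟩
    refine ⟨⟨g, fun f => Empty.elim f, fun R v => ?_⟩⟩
    cases R with
    | lt => exact (hlt (v 0) (v 1)).symm
    | color k => exact (hc k (v 0)).symm

theorem exists_relativization {ι α : Type} (δ : (CLOLang ι).Formula Unit) {n : ℕ}
    (θ : (CLOLang ι).BoundedFormula α n) :
    ∃ θ' : (CLOLang ι).BoundedFormula α n, ∀ (M : Type) [LinearOrder M] (c : ι → Set M)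
      (v : α → FmlSet ι M c δ) (xs : Fin n → FmlSet ι M c δ),
      @BoundedFormula.Realize _ _ (CLOStr ι _ (subColor c (FmlSet ι M c δ))) _ _ θ v xs ↔
        @BoundedFormula.Realize _ _ (CLOStr ι M c) _ _ θ' (fun a => (v a : M))
          fun i => (xs i : M) := by
  have hterm : ∀ {m : ℕ} (t : (CLOLang ι).Term (α ⊕ Fin m)), ∃ z, t = var z := by
    intro m t
    cases t with
    | var z => exact ⟨z, rfl⟩
    | func f _ => exact Empty.elim f
  induction θ with
  | falsum => exact ⟨⊥, fun M _ c v xs => Iff.rfl⟩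
  | equal t₁ t₂ =>
    obtain ⟨z₁, rfl⟩ := hterm t₁
    obtain ⟨z₂, rfl⟩ := hterm t₂
    refine ⟨.equal (var z₁) (var z₂), fun M _ c v xs => ?_⟩
    rcases z₁ with z₁ | z₁ <;> rcases z₂ with z₂ | z₂ <;> exact Subtype.ext_iff
  | rel R ts =>
    choose z hz using fun i => hterm (ts i)
    obtain rfl : ts = fun i => var (z i) := funext hz
    refine ⟨.rel R fun i => var (z i), fun M _ c v xs => ?_⟩
    have key : ∀ s, ((Sum.elim v xs s : FmlSet ι M c δ) : M) =
        Sum.elim (fun a => (v a : M)) (fun i => (xs i : M)) s := by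
      rintro (s | s) <;> rfl
    cases R with
    | lt =>
      change ((Sum.elim v xs (z 0) : FmlSet ι M c δ) : M) < (Sum.elim v xs (z 1) : FmlSet ι M c δ) ↔
        Sum.elim (fun a => (v a : M)) (fun i => (xs i : M)) (z 0) <
          Sum.elim (fun a => (v a : M)) (fun i => (xs i : M)) (z 1)
      rw [key, key]
    | color k =>
      change ((Sum.elim v xs (z 0) : FmlSet ι M c δ) : M) ∈ c k ↔
        Sum.elim (fun a => (v a : M)) (fun i => (xs i : M)) (z 0) ∈ c k
      rw [key]
  | imp _ _ ih₁ ih₂ =>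
    obtain ⟨θ₁, h₁⟩ := ih₁
    obtain ⟨θ₂, h₂⟩ := ih₂
    refine ⟨θ₁.imp θ₂, fun M _ c v xs => ?_⟩
    exact imp_congr (h₁ M c v xs) (h₂ M c v xs)
  | @all m θ ih =>
    obtain ⟨θ', h⟩ := ih
    let δ' : (CLOLang ι).BoundedFormula α (m + 1) :=
      BoundedFormula.relabel (fun _ : Unit => (Sum.inr (Fin.last m) : α ⊕ Fin (m + 1))) δ
    refine ⟨(δ'.imp θ').all, fun M _ c v xs => ?_⟩
    have hδ' : ∀ x : M, @BoundedFormula.Realize _ _ (CLOStr ι M c) _ _ δ' (fun a => (v a : M))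
        (Fin.snoc (fun i => (xs i : M)) x) ↔ x ∈ FmlSet ι M c δ := by
      intro x
      refine (@BoundedFormula.realize_relabel _ _ (CLOStr ι M c) _ _ _ _ _ _ _ _).trans ?_
      refine iff_of_eq ?_
      change _ = @BoundedFormula.Realize _ _ (CLOStr ι M c) _ _ δ (fun _ => x) default
      congr 1
      · ext u
        simp
      · exact Subsingleton.elim _ _
    have hsnoc : ∀ x : FmlSet ι M c δ,
        (fun i => ((Fin.snoc xs x : Fin (m + 1) → FmlSet ι M c δ) i : M)) =
          Fin.snoc (fun i => (xs i : M)) (x : M) := fun x =>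
      Fin.comp_snoc Subtype.val xs x
    refine Iff.trans ?_ (forall_congr' fun x => imp_congr_left (hδ' x)).symm
    refine Iff.trans (forall_congr' fun x => h M c v (Fin.snoc xs x)) ?_
    simp only [hsnoc]
    exact Subtype.forall

theorem cloTheory_fmlSet_eq {ι A B : Type} [LinearOrder A] [LinearOrder B] {cA : ι → Set A}
    {cB : ι → Set B} (h : CLOEquiv ι A cA B cB) (δ : (CLOLang ι).Formula Unit) :
    CLOTheory ι (FmlSet ι A cA δ) (subColor cA (FmlSet ι A cA δ)) =
      CLOTheory ι (FmlSet ι B cB δ) (subColor cB (FmlSet ι B cB δ)) := by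
  ext θ
  obtain ⟨θ', hθ'⟩ := exists_relativization δ θ
  have key : ∀ (M : Type) [LinearOrder M] (c : ι → Set M),
      θ ∈ CLOTheory ι (FmlSet ι M c δ) (subColor c (FmlSet ι M c δ)) ↔
        θ' ∈ CLOTheory ι M c := by
    intro M _ c
    refine (hθ' M c default default).trans (iff_of_eq ?_)
    change _ = @BoundedFormula.Realize _ _ (CLOStr ι M c) _ _ θ' default default
    congr 1 <;> exact Subsingleton.elim _ _
  rw [key, key, show CLOTheory ι A cA = CLOTheory ι B cB from h]

/-- The formula stating that `x` is less than all solutions of `ψ`. -/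
noncomputable def belowFml {ι : Type} (ψ : (CLOLang ι).Formula Unit) : (CLOLang ι).Formula Unit :=
  ((ψ.relabel (Sum.inr : Unit → Unit ⊕ Unit)).imp
    (ltFml (Sum.inl ()) (Sum.inr ()))).iAlls Unit

/-- The formula stating that `x` is greater than all solutions of `ψ`. -/
noncomputable def aboveFml {ι : Type} (ψ : (CLOLang ι).Formula Unit) : (CLOLang ι).Formula Unit :=
  ((ψ.relabel (Sum.inr : Unit → Unit ⊕ Unit)).imp
    (ltFml (Sum.inr ()) (Sum.inl ()))).iAlls Unit

section ConvexTypes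

variable {ι M : Type} [LinearOrder M] (c : ι → Set M)

theorem mem_fmlSet_belowFml (ψ : (CLOLang ι).Formula Unit) (x : M) :
    x ∈ FmlSet ι M c (belowFml ψ) ↔ ∀ y ∈ FmlSet ι M c ψ, x < y := by
  let := CLOStr ι M c
  refine Formula.realize_iAlls.trans ?_
  simp only [Formula.realize_imp, Formula.realize_relabel]
  exact ⟨fun h y hy => (sat_ltFml c _ _ _).1 (h (fun _ => y) hy),
    fun h i hi => (sat_ltFml c _ _ _).2 (h (i ()) hi)⟩

theorem mem_fmlSet_aboveFml (ψ : (CLOLang ι).Formula Unit) (x : M) :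
    x ∈ FmlSet ι M c (aboveFml ψ) ↔ ∀ y ∈ FmlSet ι M c ψ, y < x := by
  let := CLOStr ι M c
  refine Formula.realize_iAlls.trans ?_
  simp only [Formula.realize_imp, Formula.realize_relabel]
  exact ⟨fun h y hy => (sat_ltFml c _ _ _).1 (h (fun _ => y) hy),
    fun h i hi => (sat_ltFml c _ _ _).2 (h (i ()) hi)⟩

theorem mem_fmlSet_iInf {β : Type} [Finite β] (f : β → (CLOLang ι).Formula Unit) (x : M) :
    x ∈ FmlSet ι M c (Formula.iInf f) ↔ ∀ b, x ∈ FmlSet ι M c (f b) := by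
  let := CLOStr ι M c
  exact Formula.realize_iInf

end ConvexTypes

section

variable {ι M₀ : Type} [LinearOrder M₀] {c₀ : ι → Set M₀}

theorem convexFml_belowFml (ψ : (CLOLang ι).Formula Unit) :
    ConvexFml ι M₀ c₀ (belowFml ψ) := by
  intro B _ cB _
  refine ⟨fun x _ y hy z hz => ?_⟩
  rw [mem_fmlSet_belowFml] at hy ⊢
  exact fun w hw => hz.2.trans_lt (hy w hw)

theorem convexFml_aboveFml (ψ : (CLOLang ι).Formula Unit) :
    ConvexFml ι M₀ c₀ (aboveFml ψ) := by
  intro B _ cB _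
  refine ⟨fun x hx y _ z hz => ?_⟩
  rw [mem_fmlSet_aboveFml] at hx ⊢
  exact fun w hw => (hx w hw).trans_le hz.1

variable (c₀) in
/-- The convex type of an element of a colored linear order. -/
def convexTypeOf {A : Type} [LinearOrder A] (cA : ι → Set A) (x : A) :
    Set ((CLOLang ι).Formula Unit) :=
  {φ | ConvexFml ι M₀ c₀ φ ∧ x ∈ FmlSet ι A cA φ}

variable {A : Type} [LinearOrder A] {cA : ι → Set A}

theorem mem_typeSet_convexTypeOf (x : A) : x ∈ TypeSet ι A cA (convexTypeOf c₀ cA x) :=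
  fun _ hφ => hφ.2

theorem isConvexType_convexTypeOf (hA : CLOEquiv ι A cA M₀ c₀) (x : A) :
    IsConvexType ι M₀ c₀ (convexTypeOf c₀ cA x) := by
  refine ⟨fun φ hφ => hφ.1, ⟨A, _, cA, hA, x, mem_typeSet_convexTypeOf x⟩, ?_⟩
  rintro ψ hψ ⟨B, _, cB, hB, b, hb⟩
  refine ⟨hψ, by_contra fun hx => ?_⟩
  have hbψ : b ∈ FmlSet ι B cB ψ := hb ψ (mem_insert _ _)
  have hbx : ∀ φ, ConvexFml ι M₀ c₀ φ → x ∈ FmlSet ι A cA φ → b ∈ FmlSet ι B cB φ :=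
    fun φ h1 h2 => hb φ (mem_insert_of_mem _ ⟨h1, h2⟩)
  by_cases hlow : ∀ y ∈ FmlSet ι A cA ψ, x < y
  · have := hbx _ (convexFml_belowFml ψ) ((mem_fmlSet_belowFml cA ψ x).2 hlow)
    exact lt_irrefl b ((mem_fmlSet_belowFml cB ψ b).1 this b hbψ)
  · push Not at hlow
    obtain ⟨y, hy, hyx⟩ := hlow
    have hup : ∀ z ∈ FmlSet ι A cA ψ, z < x := fun z hz =>
      lt_of_not_ge fun hxz => hx ((hψ A _ cA hA).out hy hz ⟨hyx, hxz⟩)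
    have := hbx _ (convexFml_aboveFml ψ) ((mem_fmlSet_aboveFml cA ψ x).2 hup)
    exact lt_irrefl b ((mem_fmlSet_aboveFml cB ψ b).1 this b hbψ)

theorem IsConvexType.eq_convexTypeOf {Φ : Set ((CLOLang ι).Formula Unit)}
    (hΦ : IsConvexType ι M₀ c₀ Φ) (hA : CLOEquiv ι A cA M₀ c₀) {x : A}
    (hx : x ∈ TypeSet ι A cA Φ) : Φ = convexTypeOf c₀ cA x := by
  refine Subset.antisymm (fun φ hφ => ⟨hΦ.1 φ hφ, hx φ hφ⟩) fun φ hφ => ?_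
  refine hΦ.2.2 φ hφ.1 ⟨A, _, cA, hA, x, ?_⟩
  rintro ψ (rfl | hψ)
  · exact hφ.2
  · exact hx ψ hψ

/-- If there are finitely many convex types, then each of them is isolated. -/
theorem IsConvexType.isolated {Φ : Set ((CLOLang ι).Formula Unit)}
    (hΦ : IsConvexType ι M₀ c₀ Φ) (hfin : {Φ | IsConvexType ι M₀ c₀ Φ}.Finite) :
    IsolatedCT ι M₀ c₀ Φ := by
  have hsub : ∀ Ψ, IsConvexType ι M₀ c₀ Ψ → Φ ⊆ Ψ → Ψ = Φ := by
    intro Ψ hΨ h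
    refine Subset.antisymm (fun ψ hψ => ?_) h
    obtain ⟨B, _, cB, hB, b, hb⟩ := hΨ.2.1
    exact hΦ.2.2 ψ (hΨ.1 ψ hψ) ⟨B, _, cB, hB, b, fun φ hφ => hb φ (insert_subset hψ h hφ)⟩
  let I := {Ψ | IsConvexType ι M₀ c₀ Ψ ∧ Ψ ≠ Φ}
  have : Finite I := (hfin.subset fun Ψ h => h.1).to_subtype
  have hsep : ∀ Ψ : I, ∃ φ ∈ Φ, φ ∉ Ψ.1 := fun Ψ =>
    not_subset.1 fun h => Ψ.2.2 (hsub Ψ.1 Ψ.2.1 h)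
  choose f hf hf' using hsep
  have hconv : ConvexFml ι M₀ c₀ (Formula.iInf f) := by
    intro B _ cB hB
    refine ⟨fun x hx y hy z hz => ?_⟩
    rw [mem_fmlSet_iInf] at hx hy ⊢
    exact fun Ψ => (hΦ.1 _ (hf Ψ) B _ cB hB).out (hx Ψ) (hy Ψ) hz
  obtain ⟨B, _, cB, hB, b, hb⟩ := hΦ.2.1
  refine ⟨Formula.iInf f, ?_, hconv, fun Ψ hΨ hmem => by_contra fun hne => ?_⟩
  · rw [hΦ.eq_convexTypeOf hB hb]
    exact ⟨hconv, (mem_fmlSet_iInf cB f b).2 fun Ψ => hb _ (hf Ψ)⟩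
  · obtain ⟨C, _, cC, hC, x, hx⟩ := hΨ.2.1
    refine hf' ⟨Ψ, hΨ, hne⟩ ?_
    exact (hΨ.eq_convexTypeOf hC hx).ge
      ⟨hΦ.1 _ (hf _), (mem_fmlSet_iInf cC f x).1 (hx _ hmem) ⟨Ψ, hΨ, hne⟩⟩

theorem typeSet_eq_fmlSet (hA : CLOEquiv ι A cA M₀ c₀) {Φ : Set ((CLOLang ι).Formula Unit)}
    {δ : (CLOLang ι).Formula Unit} (hδ : δ ∈ Φ) (hδc : ConvexFml ι M₀ c₀ δ)
    (h : ∀ Ψ, IsConvexType ι M₀ c₀ Ψ → δ ∈ Ψ → Ψ = Φ) :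
    TypeSet ι A cA Φ = FmlSet ι A cA δ := by
  refine Subset.antisymm (fun x hx => hx δ hδ) fun x hx => ?_
  rw [← h _ (isConvexType_convexTypeOf hA x) ⟨hδc, hx⟩]
  exact mem_typeSet_convexTypeOf x

/-- If the sets of realizations of each convex type in two models are isomorphic, and there are
finitely many convex types, then the models are isomorphic. -/
theorem cloIso_of_typeSet_iso {B : Type} [LinearOrder B] {cB : ι → Set B}
    (hfin : {Φ | IsConvexType ι M₀ c₀ Φ}.Finite)
    (hA : CLOEquiv ι A cA M₀ c₀) (hB : CLOEquiv ι B cB M₀ c₀)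
    (h : ∀ Φ, IsConvexType ι M₀ c₀ Φ →
      CLOIso ι (TypeSet ι A cA Φ) (subColor cA _) (TypeSet ι B cB Φ) (subColor cB _)) :
    CLOIso ι A cA B cB := by
  simp only [CLOIso_iff] at h ⊢
  choose e he hec using h
  let f : A → B := fun x =>
    e _ (isConvexType_convexTypeOf hA x) ⟨x, mem_typeSet_convexTypeOf x⟩
  have hf : ∀ Φ hΦ (x : TypeSet ι A cA Φ), f x = e Φ hΦ x := by
    rintro Φ hΦ ⟨x, hx⟩
    obtain rfl := hΦ.eq_convexTypeOf hA hx
    rfl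
  have hft : ∀ x, f x ∈ TypeSet ι B cB (convexTypeOf c₀ cA x) := fun x => Subtype.prop _
  have hmono : StrictMono f := by
    intro x y hxy
    by_cases hΦ : x ∈ TypeSet ι A cA (convexTypeOf c₀ cA y)
    · have hy := mem_typeSet_convexTypeOf (c₀ := c₀) (cA := cA) y
      rw [hf _ (isConvexType_convexTypeOf hA y) ⟨x, hΦ⟩,
        hf _ (isConvexType_convexTypeOf hA y) ⟨y, hy⟩]
      exact (he _ _ _ _).1 hxy
    · obtain ⟨δ, hδ, hδc, hiso⟩ := (isConvexType_convexTypeOf hA y).isolated hfin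
      rw [typeSet_eq_fmlSet hA hδ hδc hiso] at hΦ
      have hlow : x ∈ FmlSet ι A cA (belowFml δ) :=
        (mem_fmlSet_belowFml cA δ x).2 fun z hz => lt_of_not_ge fun hzx =>
          hΦ ((hδc A _ cA hA).out hz hδ.2 ⟨hzx, hxy.le⟩)
      exact (mem_fmlSet_belowFml cB δ (f x)).1 (hft x _ ⟨convexFml_belowFml δ, hlow⟩) _
        (hft y δ hδ)
  have hsurj : Function.Surjective f := by
    intro y
    have hΦ := isConvexType_convexTypeOf hB y
    obtain ⟨x, hx⟩ := (e _ hΦ).surjective ⟨y, mem_typeSet_convexTypeOf y⟩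
    exact ⟨x, (hf _ hΦ x).trans (congrArg Subtype.val hx)⟩
  exact ⟨Equiv.ofBijective f ⟨hmono.injective, hsurj⟩, fun x y => hmono.lt_iff_lt.symm,
    fun k x => hec _ (isConvexType_convexTypeOf hA x) k ⟨x, mem_typeSet_convexTypeOf x⟩⟩

theorem aleph0CatTheory_of_locallySimple (hLS : LocallySimple ι M₀ c₀)
    (hfin : {Φ | IsConvexType ι M₀ c₀ Φ}.Finite) : Aleph0CatTheory ι (CLOTheory ι M₀ c₀) := by
  intro N₁ N₂ i₁ i₂ c₁ c₂ _ _ h₁ h₂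
  have h₁ : CLOEquiv ι N₁ c₁ M₀ c₀ := h₁
  have h₂ : CLOEquiv ι N₂ c₂ M₀ c₀ := h₂
  obtain ⟨S, _, cS, hS, hsat⟩ := exists_suffSaturated c₀
  refine cloIso_of_typeSet_iso hfin h₁ h₂ fun Φ hΦ => ?_
  obtain ⟨δ, hδ, hδc, hiso⟩ := hΦ.isolated hfin
  refine hLS S cS hS hsat Φ hΦ _ _ _ _ _ _ inferInstance inferInstance ?_ ?_
  · rw [typeSet_eq_fmlSet h₁ hδ hδc hiso, typeSet_eq_fmlSet hS hδ hδc hiso]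
    exact cloTheory_fmlSet_eq (Eq.trans h₁ (Eq.symm hS)) δ
  · rw [typeSet_eq_fmlSet h₂ hδ hδc hiso, typeSet_eq_fmlSet hS hδ hδc hiso]
    exact cloTheory_fmlSet_eq (Eq.trans h₂ (Eq.symm hS)) δ

end


section BackAndForth

theorem exists_countable_closed {X : Type} (G : Finset X → Set X) (hG : ∀ F, (G F).Countable) :
    ∃ C : Set X, C.Countable ∧ ∀ F : Finset X, ↑F ⊆ C → G F ⊆ C := by
  let D : ℕ → Set X := fun n => n.rec ∅ fun _ D => D ∪ ⋃ F ∈ {F : Finset X | ↑F ⊆ D}, G F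
  have hmono : Monotone D := monotone_nat_of_le_succ fun n => subset_union_left
  refine ⟨⋃ n, D n, countable_iUnion fun n => ?_, fun F hF => ?_⟩
  · induction n with
    | zero => exact countable_empty
    | succ n ih =>
      refine ih.union (Countable.biUnion ?_ fun F _ => hG F)
      refine MapsTo.countable_of_injOn (f := fun F : Finset X => (F : Set X)) ?_
        Finset.coe_injective.injOn (countable_ofPred_finite_subset ih)
      exact fun F hF => ⟨F.finite_toSet, hF⟩
  · obtain ⟨n, hn⟩ := hmono.directed_le.exists_mem_subset_of_finset_subset_biUnion hF
    exact (subset_union_of_subset_right (subset_biUnion_of_mem (u := G) hn) (D n)).trans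
      (subset_iUnion D (n + 1))

theorem exists_tarskiVaught_witnesses {L : FirstOrder.Language.{0, 0}} [Countable L.Symbols]
    (M : Type) [L.Structure M] :
    ∃ W : Finset M → Set M, (∀ F, (W F).Countable) ∧
      ∀ C : Set M, (∀ F : Finset M, ↑F ⊆ C → W F ⊆ C) →
        ∀ (n : ℕ) (φ : L.BoundedFormula Empty (n + 1)) (x : Fin n → M) (a : M),
          (∀ i, x i ∈ C) → φ.Realize default (Fin.snoc x a : Fin (n + 1) → M) →
            ∃ b ∈ C, φ.Realize default (Fin.snoc x b : Fin (n + 1) → M) := by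
  classical
  have hcount : ∀ n, Countable (L.BoundedFormula Empty n) := fun n =>
    Function.Injective.countable (f := fun φ => (⟨n, φ⟩ : Σ n, L.BoundedFormula Empty n))
      sigma_mk_injective
  let P : ∀ n, L.BoundedFormula Empty (n + 1) → (Fin n → M) → M → Prop := fun n φ x a =>
    φ.Realize default (Fin.snoc x a : Fin (n + 1) → M)
  refine ⟨fun F => ⋃ (n) (φ) (x : Fin n → F), {b | ∃ h : ∃ a, P n φ (fun i => x i) a,
    b = h.choose}, fun F => ?_, fun C hC n φ x a hx ha => ?_⟩
  · refine countable_iUnion fun n => countable_iUnion fun φ => countable_iUnion fun x => ?_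
    exact Set.Subsingleton.countable fun b ⟨_, hb⟩ b' ⟨_, hb'⟩ => hb.trans hb'.symm
  · have h : ∃ a, P n φ x a := ⟨a, ha⟩
    refine ⟨h.choose, hC (Finset.univ.image x) ?_ ?_, h.choose_spec⟩
    · simpa [range_subset_iff] using hx
    · simp only [mem_iUnion]
      exact ⟨n, φ, fun i => ⟨x i, by simp⟩, h, rfl⟩

instance countable_symbols_cloLang {ι : Type} [Countable ι] : Countable (CLOLang ι).Symbols := by
  have hf : ∀ n, Countable ((CLOLang ι).Functions n) := fun n =>
    inferInstanceAs (Countable Empty)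
  have hr : ∀ n, Countable ((CLOLang ι).Relations n) := fun n => by
    let code : CLORel ι n → Option ι := fun R => match R with
      | .lt => none
      | .color i => some i
    refine Function.Injective.countable (f := code) fun R S h => ?_
    cases R <;> cases S
    · rfl
    · cases h
      rfl
  exact inferInstanceAs (Countable ((Σ n, (CLOLang ι).Functions n) ⊕ Σ n, (CLOLang ι).Relations n))

theorem cloTheory_subtype_eq {ι M : Type} [LinearOrder M] (c : ι → Set M) (s : Set M)
    (h : letI := CLOStr ι M c
      ∀ (n : ℕ) (φ : (CLOLang ι).BoundedFormula Empty (n + 1)) (x : Fin n → M) (a : M),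
        (∀ i, x i ∈ s) → φ.Realize default (Fin.snoc x a : Fin (n + 1) → M) →
          ∃ b ∈ s, φ.Realize default (Fin.snoc x b : Fin (n + 1) → M)) :
    CLOTheory ι s (subColor c s) = CLOTheory ι M c := by
  let := CLOStr ι M c
  let := CLOStr ι s (subColor c s)
  let f : s ↪[CLOLang ι] M :=
    { toFun := Subtype.val
      inj' := Subtype.val_injective
      map_fun' := fun f => Empty.elim f
      map_rel' := fun R v => by cases R <;> exact Iff.rfl }
  refine (f.toElementaryEmbedding fun n φ x a ha => ?_).elementarilyEquivalent
  obtain ⟨b, hb, hb'⟩ := h n φ (f ∘ x) a (fun i => (x i).2) ha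
  exact ⟨⟨b, hb⟩, hb'⟩

/-- The positions of the back-and-forth game on `A` and `B` from which the player who picks
elements can force the play, in finitely many moves, to a position violating `good`. -/
inductive Losing {A B : Type} [DecidableEq A] [DecidableEq B] (good : Finset (A × B) → Prop) :
    Finset (A × B) → Prop
  | bad (f) : ¬ good f → Losing good f
  | forth (f) (m : A) : (∀ n, Losing good (insert (m, n) f)) → Losing good f
  | back (f) (n : B) : (∀ m, Losing good (insert (m, n) f)) → Losing good f

theorem backForthEquiv_of_not_losing {ι A B : Type} [LinearOrder A] [LinearOrder B]
    (cA : ι → Set A) (cB : ι → Set B) (h : ¬ Losing (IsPartialIso ι cA cB) ∅) :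
    BackForthEquiv ι A cA B cB := by
  refine ⟨{f | ¬ Losing (IsPartialIso ι cA cB) f}, ⟨∅, h⟩,
    fun f hf => by_contra fun hbad => hf (.bad f hbad), fun f hf m => ?_, fun f hf n => ?_⟩
  · by_contra hno
    exact hf (.forth f m fun n => by_contra fun hn =>
      hno ⟨_, hn, fun p hp => Finset.mem_insert_of_mem hp, n, Finset.mem_insert_self _ _⟩)
  · by_contra hno
    exact hf (.back f n fun m => by_contra fun hm =>
      hno ⟨_, hm, fun p hp => Finset.mem_insert_of_mem hp, m, Finset.mem_insert_self _ _⟩)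

/-- A losing position remains losing inside all sets closed under a suitable countable-valued
operator: it is not contained in the graph of a correspondence between their two halves. -/
theorem Losing.exists_operator {A B : Type} [DecidableEq A] [DecidableEq B]
    {good : Finset (A × B) → Prop} {f : Finset (A × B)} (hf : Losing good f) :
    ∃ G : Finset (A ⊕ B) → Set (A ⊕ B), (∀ F, (G F).Countable) ∧
      ∀ C : Set (A ⊕ B), (∀ F : Finset (A ⊕ B), ↑F ⊆ C → G F ⊆ C) →
        ∀ h : Set (A × B), (∀ f : Finset (A × B), ↑f ⊆ h → good f) →
          (∀ a, Sum.inl a ∈ C → ∃ b, Sum.inr b ∈ C ∧ (a, b) ∈ h) →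
          (∀ b, Sum.inr b ∈ C → ∃ a, Sum.inl a ∈ C ∧ (a, b) ∈ h) → ¬ ↑f ⊆ h := by
  classical
  have join : ∀ {Y : Type} (x : A ⊕ B) (j : Y → A ⊕ B) (_ : Function.Injective j)
      (G : Y → Finset (A ⊕ B) → Set (A ⊕ B)) (_ : ∀ y F, (G y F).Countable),
      ∃ G' : Finset (A ⊕ B) → Set (A ⊕ B), (∀ F, (G' F).Countable) ∧
        ∀ C : Set (A ⊕ B), (∀ F : Finset (A ⊕ B), ↑F ⊆ C → G' F ⊆ C) →
          x ∈ C ∧ ∀ y, j y ∈ C → ∀ F : Finset (A ⊕ B), ↑F ⊆ C → G y F ⊆ C := by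
    intro Y x j hj G hG
    refine ⟨fun F => {x} ∪ ⋃ y ∈ j ⁻¹' F, ⋃ F' ∈ F.powerset, G y F', fun F => ?_,
      fun C hC => ⟨hC ∅ (by simp) (by simp), fun y hy F hF => ?_⟩⟩
    · exact (countable_singleton x).union <|
        ((F.finite_toSet.preimage hj.injOn).countable.biUnion fun y _ =>
          F.powerset.countable_toSet.biUnion fun F' _ => hG y F')
    · refine Subset.trans (fun z hz => Or.inr ?_)
        (hC (insert (j y) F) (by simpa using insert_subset hy hF))
      exact mem_biUnion (x := y) (by simp) (mem_biUnion (x := F) (by simp) hz)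
  induction hf with
  | bad f hbad => exact ⟨fun _ => ∅, by simp, fun C _ h hh _ _ hfh => hbad (hh f hfh)⟩
  | forth f m _ ih =>
    choose G hG hG' using ih
    obtain ⟨G', hc, hcl⟩ := join (Sum.inl m) Sum.inr Sum.inr_injective G hG
    refine ⟨G', hc, fun C hC h hh h₁ h₂ hfh => ?_⟩
    obtain ⟨hm, hGC⟩ := hcl C hC
    obtain ⟨n, hn, hmn⟩ := h₁ m hm
    refine hG' n C (hGC n hn) h hh h₁ h₂ ?_
    rw [Finset.coe_insert]
    exact insert_subset hmn hfh
  | back f n _ ih =>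
    choose G hG hG' using ih
    obtain ⟨G', hc, hcl⟩ := join (Sum.inr n) Sum.inl Sum.inl_injective G hG
    refine ⟨G', hc, fun C hC h hh h₁ h₂ hfh => ?_⟩
    obtain ⟨hn, hGC⟩ := hcl C hC
    obtain ⟨m, hm, hmn⟩ := h₂ n hn
    refine hG' m C (hGC m hm) h hh h₁ h₂ ?_
    rw [Finset.coe_insert]
    exact insert_subset hmn hfh

/-- Any two models of an `ℵ₀`-categorical theory of colored linear orders are back-and-forth
equivalent. -/
theorem Aleph0CatTheory.backForthEquiv {ι A B : Type} [Countable ι] [LinearOrder A]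
    [LinearOrder B] {cA : ι → Set A} {cB : ι → Set B} {T : (CLOLang ι).Theory}
    (hT : Aleph0CatTheory ι T) (hA : CLOTheory ι A cA = T) (hB : CLOTheory ι B cB = T) :
    BackForthEquiv ι A cA B cB := by
  classical
  refine backForthEquiv_of_not_losing cA cB fun hlose => ?_
  obtain ⟨G, hG, hGC⟩ := hlose.exists_operator
  let := CLOStr ι A cA
  let := CLOStr ι B cB
  obtain ⟨WA, hWA, hWAC⟩ := exists_tarskiVaught_witnesses (L := CLOLang ι) A
  obtain ⟨WB, hWB, hWBC⟩ := exists_tarskiVaught_witnesses (L := CLOLang ι) B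
  obtain ⟨C, hC, hcl⟩ := exists_countable_closed
    (fun F => G F ∪ (Sum.inl '' WA F.toLeft ∪ Sum.inr '' WB F.toRight))
    fun F => (hG F).union (((hWA _).image _).union ((hWB _).image _))
  have hTA : CLOTheory ι (Sum.inl ⁻¹' C : Set A) (subColor cA _) = T := by
    refine (cloTheory_subtype_eq cA _ (hWAC _ fun F hF a ha => ?_)).trans hA
    refine hcl (F.map .inl) (by simpa using hF) (Or.inr (Or.inl ⟨a, ?_, rfl⟩))
    rwa [show (F.map .inl).toLeft = F by ext; simp]
  have hTB : CLOTheory ι (Sum.inr ⁻¹' C : Set B) (subColor cB _) = T := by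
    refine (cloTheory_subtype_eq cB _ (hWBC _ fun F hF b hb => ?_)).trans hB
    refine hcl (F.map .inr) (by simpa using hF) (Or.inr (Or.inr ⟨b, ?_, rfl⟩))
    rwa [show (F.map .inr).toRight = F by ext; simp]
  obtain ⟨g, hlt, hc⟩ := (CLOIso_iff _ _).1 (hT _ _ _ _ _ _
    (hC.preimage Sum.inl_injective).to_subtype (hC.preimage Sum.inr_injective).to_subtype hTA hTB)
  refine hGC C (fun F hF => subset_union_left.trans (hcl F hF))
    (range fun a : (Sum.inl ⁻¹' C : Set A) => ((a : A), (g a : B))) (fun f hf p hp q hq => ?_)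
    (fun a ha => ⟨g ⟨a, ha⟩, (g ⟨a, ha⟩).2, ⟨a, ha⟩, rfl⟩)
    (fun b hb => ⟨g.symm ⟨b, hb⟩, (g.symm ⟨b, hb⟩).2, g.symm ⟨b, hb⟩, by simp⟩) (by simp)
  obtain ⟨a, rfl⟩ := hf hp
  obtain ⟨a', rfl⟩ := hf hq
  exact ⟨hlt a a', by simp [Subtype.ext_iff.symm], fun k => hc k a⟩

end BackAndForth

end ColoredOrders

theorem stmt15 {ι : Type} [Countable ι] {M₀ : Type} [LinearOrder M₀] (c₀ : ι → Set M₀)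
    (hLS : LocallySimple ι M₀ c₀)
    (hfin : {Φ | IsConvexType ι M₀ c₀ Φ}.Finite) :
    Aleph0CatTheory ι (CLOTheory ι M₀ c₀) ∧
      ∀ (A : Type) [LinearOrder A], ∀ cA : ι → Set A,
        ∀ (B : Type) [LinearOrder B], ∀ cB : ι → Set B,
          CLOEquiv ι A cA M₀ c₀ → CLOEquiv ι B cB M₀ c₀ →
            BackForthEquiv ι A cA B cB := by
  have hcat := aleph0CatTheory_of_locallySimple hLS hfin
  exact ⟨hcat, fun A _ cA B _ cB hA hB => hcat.backForthEquiv hA hB⟩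
end

section
/- Let T be a locally simple complete CLO theory such that IT(T) is uncountable. Then there is a family of 2^{2^{ℵ₀}} models of T whose sets of realized convex types are pairwise distinct; in particular, T has at least 2^{2^{ℵ₀}} models that are pairwise not back-and-forth equivalent (hence pairwise non-isomorphic). -/
open FirstOrder Language Set

namespace CLO

variable {ι M N : Type}

/-- Satisfaction of a formula whose free variables are indexed by `Fin n`. -/
def FinSat (M : Type) [LinearOrder M] (c : ι → Set M) {n : ℕ}
    (φ : (CLOLang ι).BoundedFormula Empty n) (w : Fin n → M) : Prop :=
  letI := CLOStr ι M c
  φ.Realize default w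

/-- A one-variable formula, evaluated at the `j`-th coordinate of a finite tuple. -/
def atCoord {k : ℕ} (j : Fin k) (φ : (CLOLang ι).Formula Unit) :
    (CLOLang ι).BoundedFormula Empty k :=
  BoundedFormula.relabel (n := k) (k := 0) (fun _ => Sum.inr j) φ

section Sat

variable [LinearOrder M] (c : ι → Set M)

theorem finSat_imp {n : ℕ} (φ ψ : (CLOLang ι).BoundedFormula Empty n) (w : Fin n → M) :
    FinSat M c (φ.imp ψ) w ↔ (FinSat M c φ w → FinSat M c ψ w) :=
  Iff.rfl

theorem finSat_ex {n : ℕ} (φ : (CLOLang ι).BoundedFormula Empty (n + 1)) (w : Fin n → M) :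
    FinSat M c φ.ex w ↔ ∃ z, FinSat M c φ (Fin.snoc w z) := by
  let := CLOStr ι M c
  exact BoundedFormula.realize_ex

theorem finSat_inf {n : ℕ} (φ ψ : (CLOLang ι).BoundedFormula Empty n) (w : Fin n → M) :
    FinSat M c (φ ⊓ ψ) w ↔ FinSat M c φ w ∧ FinSat M c ψ w := by
  let := CLOStr ι M c
  exact BoundedFormula.realize_inf

theorem finSat_iInf {β : Type} [Finite β] {n : ℕ}
    (φ : β → (CLOLang ι).BoundedFormula Empty n) (w : Fin n → M) :
    FinSat M c (BoundedFormula.iInf φ) w ↔ ∀ b, FinSat M c (φ b) w := by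
  let := CLOStr ι M c
  exact BoundedFormula.realize_iInf

theorem finSat_atCoord {k : ℕ} (j : Fin k) (φ : (CLOLang ι).Formula Unit) (w : Fin k → M) :
    FinSat M c (atCoord j φ) w ↔ Sat M c φ fun _ => w j := by
  let := CLOStr ι M c
  refine (BoundedFormula.realize_relabel (φ := φ) (m := k) (n := 0)).trans ?_
  unfold Sat Formula.Realize
  rw [iff_eq_eq]
  congr 1
  exact Subsingleton.elim _ _

theorem sat_iInf {α β : Type} [Finite β] (φ : β → (CLOLang ι).Formula α) (v : α → M) :
    Sat M c (Formula.iInf φ) v ↔ ∀ b, Sat M c (φ b) v := by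
  let := CLOStr ι M c
  exact Formula.realize_iInf

theorem sat_not {α : Type} (φ : (CLOLang ι).Formula α) (v : α → M) :
    Sat M c φ.not v ↔ ¬ Sat M c φ v :=
  Iff.rfl

end Sat

/-- The formula stating that `x` lies strictly below every realization of `φ`. -/
def belowFml (φ : (CLOLang ι).Formula Unit) : (CLOLang ι).Formula Unit :=
  BoundedFormula.all (n := 0)
    ((BoundedFormula.relabel (n := 1) (k := 0) (fun _ => Sum.inr 0) φ).imp
      (Relations.boundedFormula₂ (L := CLOLang ι) CLORel.lt
        (Term.var (Sum.inl ())) (Term.var (Sum.inr 0))))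

/-- The formula stating that `x` lies strictly above every realization of `φ`. -/
def aboveFml (φ : (CLOLang ι).Formula Unit) : (CLOLang ι).Formula Unit :=
  BoundedFormula.all (n := 0)
    ((BoundedFormula.relabel (n := 1) (k := 0) (fun _ => Sum.inr 0) φ).imp
      (Relations.boundedFormula₂ (L := CLOLang ι) CLORel.lt
        (Term.var (Sum.inr 0)) (Term.var (Sum.inl ()))))

theorem sat_belowFml [LinearOrder M] (c : ι → Set M) (φ : (CLOLang ι).Formula Unit) (x : M) :
    Sat M c (belowFml φ) (fun _ => x) ↔ ∀ y, Sat M c φ (fun _ => y) → x < y := by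
  let := CLOStr ι M c
  unfold Sat belowFml Formula.Realize
  rw [BoundedFormula.realize_all]
  refine forall_congr' fun y => ?_
  rw [BoundedFormula.realize_imp]
  refine imp_congr ?_ Iff.rfl
  refine (BoundedFormula.realize_relabel (φ := φ) (m := 1) (n := 0)).trans ?_
  rw [iff_eq_eq]
  congr 1
  exact Subsingleton.elim _ _

theorem sat_aboveFml [LinearOrder M] (c : ι → Set M) (φ : (CLOLang ι).Formula Unit) (x : M) :
    Sat M c (aboveFml φ) (fun _ => x) ↔ ∀ y, Sat M c φ (fun _ => y) → y < x := by
  let := CLOStr ι M c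
  unfold Sat aboveFml Formula.Realize
  rw [BoundedFormula.realize_all]
  refine forall_congr' fun y => ?_
  rw [BoundedFormula.realize_imp]
  refine imp_congr ?_ Iff.rfl
  refine (BoundedFormula.realize_relabel (φ := φ) (m := 1) (n := 0)).trans ?_
  rw [iff_eq_eq]
  congr 1
  exact Subsingleton.elim _ _

section Equivalence

variable [LinearOrder M] [LinearOrder N] {cM : ι → Set M} {cN : ι → Set N}

theorem finSat_iff_of_equiv (h : CLOEquiv ι M cM N cN)
    (φ : (CLOLang ι).BoundedFormula Empty 0) :
    FinSat M cM φ default ↔ FinSat N cN φ default := by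
  let := CLOStr ι M cM
  let := CLOStr ι N cN
  exact elementarilyEquivalent_iff.1 h φ

theorem exists_sat_iff_of_equiv (h : CLOEquiv ι M cM N cN) (φ : (CLOLang ι).Formula Unit) :
    (∃ x, Sat M cM φ fun _ => x) ↔ ∃ x, Sat N cN φ fun _ => x := by
  have key := finSat_iff_of_equiv h (BoundedFormula.ex (atCoord (k := 1) 0 φ))
  simpa only [finSat_ex, finSat_atCoord, Fin.snoc_zero] using key

theorem equiv_trans {P : Type} [LinearOrder P] {cP : ι → Set P}
    (h : CLOEquiv ι M cM N cN) (h' : CLOEquiv ι N cN P cP) : CLOEquiv ι M cM P cP :=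
  Eq.trans h h'

end Equivalence

theorem convexFml_belowFml [LinearOrder M] (c : ι → Set M) (φ : (CLOLang ι).Formula Unit) :
    ConvexFml ι M c (belowFml φ) := by
  intro B iB cB _
  refine ⟨fun x _ y hy z hz => ?_⟩
  simp only [FmlSet, mem_ofPred_eq, sat_belowFml] at hy ⊢
  exact fun w hw => hz.2.trans_lt (hy w hw)

theorem convexFml_aboveFml [LinearOrder M] (c : ι → Set M) (φ : (CLOLang ι).Formula Unit) :
    ConvexFml ι M c (aboveFml φ) := by
  intro B iB cB _
  refine ⟨fun x hx y _ z hz => ?_⟩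
  simp only [FmlSet, mem_ofPred_eq, sat_aboveFml] at hx ⊢
  exact fun w hw => (hx w hw).trans_le hz.1

/-- The convex formulas, relative to the theory of `(M₀, c₀)`, satisfied by the point `x`. -/
def convexTypeOf {M₀ : Type} [LinearOrder M₀] (c₀ : ι → Set M₀) [LinearOrder M] (c : ι → Set M)
    (x : M) : Set ((CLOLang ι).Formula Unit) :=
  {φ | ConvexFml ι M₀ c₀ φ ∧ Sat M c φ fun _ => x}

section ConvexTypes

variable {M₀ : Type} [LinearOrder M₀] {c₀ : ι → Set M₀} [LinearOrder M] {c : ι → Set M}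

/-- A point outside a convex definable set is separated from it by a convex formula. -/
theorem exists_convexFml_separating (hM : CLOEquiv ι M c M₀ c₀) {φ : (CLOLang ι).Formula Unit}
    (hφ : ConvexFml ι M₀ c₀ φ) {x : M} (hx : ¬ Sat M c φ fun _ => x) :
    ∃ ψ ∈ convexTypeOf c₀ c x, ∀ (B : Type) (_ : LinearOrder B) (cB : ι → Set B) (y : B),
      Sat B cB φ (fun _ => y) → ¬ Sat B cB ψ fun _ => y := by
  have hconv := hφ M inferInstance c hM
  by_cases hbelow : ∀ y, Sat M c φ (fun _ => y) → x < y
  · refine ⟨belowFml φ, ⟨convexFml_belowFml c₀ φ, (sat_belowFml c φ x).2 hbelow⟩, ?_⟩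
    intro B _ cB y hy h
    exact lt_irrefl y ((sat_belowFml cB φ y).1 h y hy)
  · push Not at hbelow
    obtain ⟨y, hy, hyx⟩ := hbelow
    refine ⟨aboveFml φ, ⟨convexFml_aboveFml c₀ φ, (sat_aboveFml c φ x).2 fun z hz => ?_⟩, ?_⟩
    · by_contra hzx
      exact hx (hconv.out hy hz ⟨hyx, not_lt.1 hzx⟩)
    · intro B _ cB y hy h
      exact lt_irrefl y ((sat_aboveFml cB φ y).1 h y hy)

theorem isConvexType_convexTypeOf (hM : CLOEquiv ι M c M₀ c₀) (x : M) :
    IsConvexType ι M₀ c₀ (convexTypeOf c₀ c x) := by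
  refine ⟨fun φ hφ => hφ.1, ⟨M, inferInstance, c, hM, x, fun φ hφ => hφ.2⟩, fun ψ hψ hcons => ?_⟩
  refine ⟨hψ, ?_⟩
  by_contra hx
  obtain ⟨B, iB, cB, _, b, hb⟩ := hcons
  obtain ⟨θ, hθ, hsep⟩ := exists_convexFml_separating hM hψ hx
  exact hsep B iB cB b (hb ψ (mem_insert _ _)) (hb θ (mem_insert_of_mem _ hθ))

theorem eq_convexTypeOf_of_isConvexType (hM : CLOEquiv ι M c M₀ c₀)
    {Φ : Set ((CLOLang ι).Formula Unit)} (hΦ : IsConvexType ι M₀ c₀ Φ) {x : M}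
    (hx : x ∈ TypeSet ι M c Φ) : Φ = convexTypeOf c₀ c x := by
  refine Subset.antisymm (fun φ hφ => ⟨hΦ.1 φ hφ, hx φ hφ⟩) fun ψ hψ => ?_
  refine hΦ.2.2 ψ hψ.1 ⟨M, inferInstance, c, hM, x, fun φ hφ => ?_⟩
  rcases hφ with rfl | hφ
  · exact hψ.2
  · exact hx φ hφ

theorem realizedConvexTypes_eq_range (hM : CLOEquiv ι M c M₀ c₀) :
    {Φ | IsConvexType ι M₀ c₀ Φ ∧ (TypeSet ι M c Φ).Nonempty} =
      range (convexTypeOf c₀ c) := by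
  ext Φ
  constructor
  · rintro ⟨hΦ, x, hx⟩
    exact ⟨x, (eq_convexTypeOf_of_isConvexType hM hΦ hx).symm⟩
  · rintro ⟨x, rfl⟩
    exact ⟨isConvexType_convexTypeOf hM x, x, fun φ hφ => hφ.2⟩

/-- Points with different convex types are separated by a convex formula. -/
theorem exists_mem_convexTypeOf_not_sat (hM : CLOEquiv ι M c M₀ c₀) {x y : M}
    (hxy : convexTypeOf c₀ c x ≠ convexTypeOf c₀ c y) :
    ∃ φ ∈ convexTypeOf c₀ c x, ¬ Sat M c φ fun _ => y := by
  by_contra! h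
  refine hxy (Subset.antisymm (fun φ hφ => ⟨hφ.1, h φ hφ⟩) fun φ hφ => ⟨hφ.1, ?_⟩)
  by_contra hx
  obtain ⟨ψ, hψ, hsep⟩ := exists_convexFml_separating hM hφ.1 hx
  exact hsep M _ c y hφ.2 (h ψ hψ)

end ConvexTypes

/-- Inside a convex definable set, the truth of a formula with parameters outside that set is
controlled by finitely many parameter-free formulas in the remaining variables. -/
theorem exists_finset_controlling [LinearOrder M] (c : ι → Set M) (χ : (CLOLang ι).Formula Unit)
    (hχ : (FmlSet ι M c χ).OrdConnected) {n : ℕ} (φ : (CLOLang ι).BoundedFormula Empty n) :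
    ∀ (k : ℕ) (σ : Fin n → Option (Fin k)),
      ∃ Θ : Set ((CLOLang ι).BoundedFormula Empty k), Θ.Finite ∧ ∀ x x' : Fin k → M,
        (∀ j, x j ∈ FmlSet ι M c χ) → (∀ j, x' j ∈ FmlSet ι M c χ) →
        (∀ θ ∈ Θ, FinSat M c θ x ↔ FinSat M c θ x') → ∀ w w' : Fin n → M,
        (∀ i j, σ i = some j → w i = x j ∧ w' i = x' j) →
        (∀ i, σ i = none → w i = w' i ∧ w i ∉ FmlSet ι M c χ) →
        (FinSat M c φ w ↔ FinSat M c φ w') := by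
  induction φ with
  | falsum => exact fun k σ => ⟨∅, finite_empty, fun _ _ _ _ _ _ _ _ _ => Iff.rfl⟩
  | @equal n t₁ t₂ =>
    intro k σ
    rcases t₁ with (e | i) | f
    · exact e.elim
    swap
    · exact Empty.elim f
    rcases t₂ with (e | j) | f
    · exact e.elim
    swap
    · exact Empty.elim f
    have key : ∀ w : Fin n → M, FinSat M c (BoundedFormula.equal (Term.var (Sum.inr i))
        (Term.var (Sum.inr j))) w ↔ w i = w j := fun w => Iff.rfl
    simp only [key]
    rcases hi : σ i with _ | a <;> rcases hj : σ j with _ | b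
    · refine ⟨∅, finite_empty, fun x x' hx hx' h w w' h₁ h₂ => ?_⟩
      rw [(h₂ i hi).1, (h₂ j hj).1]
    · refine ⟨∅, finite_empty, fun x x' hx hx' h w w' h₁ h₂ => ?_⟩
      have hi' := h₂ i hi
      refine iff_of_false (fun e => hi'.2 ?_) (fun e => hi'.2 ?_)
      · rw [e, (h₁ j b hj).1]; exact hx b
      · rw [hi'.1, e, (h₁ j b hj).2]; exact hx' b
    · refine ⟨∅, finite_empty, fun x x' hx hx' h w w' h₁ h₂ => ?_⟩
      have hj' := h₂ j hj
      refine iff_of_false (fun e => hj'.2 ?_) (fun e => hj'.2 ?_)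
      · rw [← e, (h₁ i a hi).1]; exact hx a
      · rw [hj'.1, ← e, (h₁ i a hi).2]; exact hx' a
    · refine ⟨{BoundedFormula.equal (Term.var (Sum.inr a)) (Term.var (Sum.inr b))},
        finite_singleton _, fun x x' hx hx' h w w' h₁ h₂ => ?_⟩
      have := h _ rfl
      rw [(h₁ i a hi).1, (h₁ i a hi).2, (h₁ j b hj).1, (h₁ j b hj).2]
      exact this
  | @rel n l R ts =>
    intro k σ
    have hts : ∀ m, ∃ i, ts m = Term.var (Sum.inr i) := by
      intro m
      rcases ts m with (e | i) | f
      · exact e.elim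
      · exact ⟨i, rfl⟩
      · exact Empty.elim f
    choose p hp using hts
    obtain rfl : ts = fun m => Term.var (Sum.inr (p m)) := funext hp
    clear hp
    cases R with
    | color q =>
      have key : ∀ w : Fin n → M, FinSat M c (BoundedFormula.rel (L := CLOLang ι)
          (CLORel.color q) (fun m => Term.var (Sum.inr (p m)))) w ↔ w (p 0) ∈ c q :=
        fun w => Iff.rfl
      simp only [key]
      rcases hi : σ (p 0) with _ | a
      · refine ⟨∅, finite_empty, fun x x' hx hx' h w w' h₁ h₂ => ?_⟩
        rw [(h₂ _ hi).1]
      · refine ⟨{BoundedFormula.rel (L := CLOLang ι) (CLORel.color q)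
          (fun _ => Term.var (Sum.inr a))},
          finite_singleton _, fun x x' hx hx' h w w' h₁ h₂ => ?_⟩
        have := h _ rfl
        rw [(h₁ _ a hi).1, (h₁ _ a hi).2]
        exact this
    | lt =>
      have key : ∀ w : Fin n → M, FinSat M c (BoundedFormula.rel (L := CLOLang ι)
          CLORel.lt (fun m => Term.var (Sum.inr (p m)))) w ↔ w (p 0) < w (p 1) :=
        fun w => Iff.rfl
      have hside : ∀ z u u' : M, z ∉ FmlSet ι M c χ → u ∈ FmlSet ι M c χ →
          u' ∈ FmlSet ι M c χ → z < u → z < u' := by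
        intro z u u' hz hu hu' hzu
        by_contra hzu'
        exact hz (hχ.out hu' hu ⟨not_lt.1 hzu', hzu.le⟩)
      have hside' : ∀ z u u' : M, z ∉ FmlSet ι M c χ → u ∈ FmlSet ι M c χ →
          u' ∈ FmlSet ι M c χ → u < z → u' < z := by
        intro z u u' hz hu hu' hzu
        by_contra hzu'
        exact hz (hχ.out hu hu' ⟨hzu.le, not_lt.1 hzu'⟩)
      simp only [key]
      rcases hi : σ (p 0) with _ | a <;> rcases hj : σ (p 1) with _ | b
      · refine ⟨∅, finite_empty, fun x x' hx hx' h w w' h₁ h₂ => ?_⟩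
        rw [(h₂ _ hi).1, (h₂ _ hj).1]
      · refine ⟨∅, finite_empty, fun x x' hx hx' h w w' h₁ h₂ => ?_⟩
        have hi' := h₂ _ hi
        rw [← hi'.1, (h₁ _ b hj).1, (h₁ _ b hj).2]
        exact ⟨hside _ _ _ hi'.2 (hx b) (hx' b), hside _ _ _ hi'.2 (hx' b) (hx b)⟩
      · refine ⟨∅, finite_empty, fun x x' hx hx' h w w' h₁ h₂ => ?_⟩
        have hj' := h₂ _ hj
        rw [← hj'.1, (h₁ _ a hi).1, (h₁ _ a hi).2]
        exact ⟨hside' _ _ _ hj'.2 (hx a) (hx' a), hside' _ _ _ hj'.2 (hx' a) (hx a)⟩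
      · refine ⟨{BoundedFormula.rel (L := CLOLang ι) CLORel.lt
          (fun m => Term.var (Sum.inr ((![a, b] : Fin 2 → Fin k) m)))},
          finite_singleton _, fun x x' hx hx' h w w' h₁ h₂ => ?_⟩
        have := h _ rfl
        rw [(h₁ _ a hi).1, (h₁ _ a hi).2, (h₁ _ b hj).1, (h₁ _ b hj).2]
        exact this
  | imp φ ψ ihφ ihψ =>
    intro k σ
    obtain ⟨Θ₁, hfin₁, hΘ₁⟩ := ihφ k σ
    obtain ⟨Θ₂, hfin₂, hΘ₂⟩ := ihψ k σ
    refine ⟨Θ₁ ∪ Θ₂, hfin₁.union hfin₂, fun x x' hx hx' h w w' h₁ h₂ => ?_⟩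
    rw [finSat_imp, finSat_imp,
      hΘ₁ x x' hx hx' (fun θ hθ => h θ (Or.inl hθ)) w w' h₁ h₂,
      hΘ₂ x x' hx hx' (fun θ hθ => h θ (Or.inr hθ)) w w' h₁ h₂]
  | @all n φ ih =>
    intro k σ
    obtain ⟨Θout, hfinout, hout⟩ := ih k (Fin.snoc σ none)
    obtain ⟨Θin, hfinin, hin⟩ :=
      ih (k + 1) (Fin.snoc (fun i => (σ i).map Fin.castSucc) (some (Fin.last k)))
    classical
    have : Finite Θin := hfinin
    let pattern : Set Θin → (CLOLang ι).BoundedFormula Empty (k + 1) := fun U =>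
      atCoord (Fin.last k) χ ⊓
        BoundedFormula.iInf fun θ : Θin => if θ ∈ U then θ.1 else θ.1.not
    refine ⟨Θout ∪ range fun U => (pattern U).ex, hfinout.union (finite_range _), ?_⟩
    suffices H : ∀ x x' : Fin k → M,
        (∀ j, x j ∈ FmlSet ι M c χ) → (∀ j, x' j ∈ FmlSet ι M c χ) →
        (∀ θ ∈ Θout ∪ range fun U => (pattern U).ex, FinSat M c θ x ↔ FinSat M c θ x') →
        ∀ w w' : Fin n → M,
        (∀ i j, σ i = some j → w i = x j ∧ w' i = x' j) →
        (∀ i, σ i = none → w i = w' i ∧ w i ∉ FmlSet ι M c χ) →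
        (FinSat M c φ.all w' → FinSat M c φ.all w) by
      intro x x' hx hx' h w w' h₁ h₂
      refine ⟨H x' x hx' hx (fun θ hθ => (h θ hθ).symm) w' w
        (fun i j hij => (h₁ i j hij).symm) (fun i hi => ?_), H x x' hx hx' h w w' h₁ h₂⟩
      rw [← (h₂ i hi).1]
      exact ⟨rfl, (h₂ i hi).2⟩
    intro x x' hx hx' h w w' h₁ h₂ hall z
    by_cases hz : z ∈ FmlSet ι M c χ
    · let U : Set Θin := {θ | FinSat M c θ.1 (Fin.snoc x z)}
      have hxU : FinSat M c (pattern U).ex x := by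
        rw [finSat_ex]
        refine ⟨z, ?_⟩
        rw [finSat_inf, finSat_atCoord, finSat_iInf]
        refine ⟨by rw [Fin.snoc_last]; exact hz, fun θ => ?_⟩
        split_ifs with hθ
        · exact hθ
        · exact hθ
      rw [h _ (Or.inr ⟨U, rfl⟩), finSat_ex] at hxU
      obtain ⟨z', hz'⟩ := hxU
      rw [finSat_inf, finSat_atCoord, finSat_iInf, Fin.snoc_last] at hz'
      refine (hin (Fin.snoc x z) (Fin.snoc x' z') ?_ ?_ ?_ (Fin.snoc w z) (Fin.snoc w' z')
        ?_ ?_).2 (hall z')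
      · exact Fin.lastCases (by simpa using hz) fun j => by simpa using hx j
      · exact Fin.lastCases (by rw [Fin.snoc_last]; exact hz'.1) fun j => by simpa using hx' j
      · intro θ hθ
        have hpat := hz'.2 ⟨θ, hθ⟩
        split_ifs at hpat with hU
        · exact iff_of_true hU hpat
        · exact iff_of_false hU hpat
      · refine Fin.lastCases (fun j hj => ?_) fun i j hij => ?_
        · rw [Fin.snoc_last] at hj
          obtain rfl := Option.some.inj hj
          simp
        · rw [Fin.snoc_castSucc, Option.map_eq_some_iff] at hij
          obtain ⟨j', hj', rfl⟩ := hij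
          simpa using h₁ i j' hj'
      · refine Fin.lastCases (fun hj => ?_) fun i hi => ?_
        · simp at hj
        · rw [Fin.snoc_castSucc, Option.map_eq_none_iff] at hi
          simpa using h₂ i hi
    · refine (hout x x' hx hx' (fun θ hθ => h θ (Or.inl hθ)) (Fin.snoc w z) (Fin.snoc w' z)
        ?_ ?_).2 (hall z)
      · refine Fin.lastCases (fun j hj => ?_) fun i j hij => ?_
        · simp at hj
        · rw [Fin.snoc_castSucc] at hij
          simpa using h₁ i j hij
      · refine Fin.lastCases (fun _ => ?_) fun i hi => ?_
        · simpa using hz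
        · rw [Fin.snoc_castSucc] at hi
          simpa using h₂ i hi

section Submodel

variable {M₀ : Type} [LinearOrder M₀] {c₀ : ι → Set M₀} [LinearOrder M] {c : ι → Set M}

/-- The inclusion of a subset into a CLO. -/
def inclusion (c : ι → Set M) (A : Set M) :
    @Embedding (CLOLang ι) A M (CLOStr ι A (subColor c A)) (CLOStr ι M c) :=
  let := CLOStr ι A (subColor c A)
  let := CLOStr ι M c
  { toFun := Subtype.val
    inj' := Subtype.val_injective
    map_fun' := fun f => Empty.elim f
    map_rel' := fun r _ => by cases r <;> exact Iff.rfl }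

/-- A union of convex types which meets every nonempty definable set is an elementary
substructure. -/
theorem elementary_of_dense (hM : CLOEquiv ι M c M₀ c₀)
    (Y : Set (Set ((CLOLang ι).Formula Unit)))
    (hY : ∀ ψ : (CLOLang ι).BoundedFormula Empty 1, (∃ a, FinSat M c ψ fun _ => a) →
      ∃ d, convexTypeOf c₀ c d ∈ Y ∧ FinSat M c ψ fun _ => d) :
    let A : Set M := {x | convexTypeOf c₀ c x ∈ Y}
    CLOEquiv ι A (subColor c A) M c ∧
      ∀ (φ : (CLOLang ι).Formula Unit) (x : A),
        Sat A (subColor c A) φ (fun _ => x) ↔ Sat M c φ fun _ => x.1 := by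
  intro A
  let := CLOStr ι A (subColor c A)
  let := CLOStr ι M c
  have htv : ∀ (n : ℕ) (φ : (CLOLang ι).BoundedFormula Empty (n + 1)) (x : Fin n → A) (a : M),
      φ.Realize default (Fin.snoc (inclusion c A ∘ x) a : _ → M) →
        ∃ b : A, φ.Realize default (Fin.snoc (inclusion c A ∘ x) (inclusion c A b) : _ → M) := by
    intro n φ x a ha
    by_cases haY : convexTypeOf c₀ c a ∈ Y
    · exact ⟨⟨a, haY⟩, ha⟩
    have hsep : ∀ i, ∃ χ ∈ convexTypeOf c₀ c a, ¬ Sat M c χ fun _ => (x i).1 := fun i =>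
      exists_mem_convexTypeOf_not_sat hM fun h => haY (h ▸ (x i).2)
    choose χ hχ hχx using hsep
    have hmem : ∀ y, y ∈ FmlSet ι M c (Formula.iInf χ) ↔ ∀ i, y ∈ FmlSet ι M c (χ i) := fun y =>
      sat_iInf c χ _
    have hconv : (FmlSet ι M c (Formula.iInf χ)).OrdConnected := by
      refine ⟨fun u hu v hv z hz => (hmem z).2 fun i => ?_⟩
      exact ((hχ i).1 M inferInstance c hM).out ((hmem u).1 hu i) ((hmem v).1 hv i) hz
    obtain ⟨Θ, hfin, hΘ⟩ := exists_finset_controlling c (Formula.iInf χ) hconv φ 1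
      (Fin.snoc (fun _ => none) (some 0))
    classical
    have : Finite Θ := hfin
    obtain ⟨d, hdY, hd⟩ := hY (atCoord 0 (Formula.iInf χ) ⊓
      BoundedFormula.iInf fun θ : Θ => if FinSat M c θ.1 (fun _ => a) then θ.1 else θ.1.not) (by
        refine ⟨a, ?_⟩
        rw [finSat_inf, finSat_atCoord, finSat_iInf]
        refine ⟨(hmem a).2 fun i => (hχ i).2, fun θ => ?_⟩
        split_ifs with hθ
        · exact hθ
        · exact hθ)
    rw [finSat_inf, finSat_atCoord, finSat_iInf] at hd
    refine ⟨⟨d, hdY⟩, (hΘ (fun _ => a) (fun _ => d) (fun _ => (hmem a).2 fun i => (hχ i).2)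
      (fun _ => hd.1) (fun θ hθ => ?_) _ _ ?_ ?_).1 ha⟩
    · have hpat := hd.2 ⟨θ, hθ⟩
      split_ifs at hpat with hU
      · exact iff_of_true hU hpat
      · exact iff_of_false hU hpat
    · refine Fin.lastCases (fun j _ => ?_) fun i j hij => ?_
      · rw [Fin.snoc_last, Fin.snoc_last]
        exact ⟨rfl, rfl⟩
      · simp at hij
    · refine Fin.lastCases (fun hj => ?_) fun i _ => ?_
      · simp at hj
      · rw [Fin.snoc_castSucc, Fin.snoc_castSucc]
        exact ⟨rfl, fun h => hχx i ((hmem _).1 h i)⟩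
  let e := (inclusion c A).toElementaryEmbedding htv
  exact ⟨e.elementarilyEquivalent, fun φ x => (e.map_formula φ fun _ => x).symm⟩

end Submodel

/-- Every structure elementarily equivalent to a CLO is a CLO. -/
theorem exists_cloStr_eq {M₀ : Type} [LinearOrder M₀] (c₀ : ι → Set M₀)
    (str : (CLOLang ι).Structure M)
    (h : ∀ φ : (CLOLang ι).Sentence, @Sentence.Realize (CLOLang ι) M str φ ↔
      @Sentence.Realize (CLOLang ι) M₀ (CLOStr ι M₀ c₀) φ) :
    ∃ (i : LinearOrder M) (c : ι → Set M), @CLOStr ι M i c = str := by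
  let := CLOStr ι M₀ c₀
  let r : (CLOLang ι).Relations 2 := CLORel.lt
  have hirr : Std.Irrefl fun x y : M => Structure.RelMap r ![x, y] := by
    rw [← Relations.realize_irreflexive, h, Relations.realize_irreflexive]
    exact ⟨fun x => lt_irrefl x⟩
  have htrans : IsTrans M fun x y : M => Structure.RelMap r ![x, y] := by
    rw [← Relations.realize_transitive, h, Relations.realize_transitive]
    exact ⟨fun x y z => lt_trans (a := x) (b := y) (c := z)⟩
  let tri : (CLOLang ι).Sentence := BoundedFormula.all <| BoundedFormula.all <|
    BoundedFormula.imp (BoundedFormula.not (r.boundedFormula₂ (Term.var (Sum.inr 0))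
      (Term.var (Sum.inr 1)))) <|
    BoundedFormula.imp (BoundedFormula.not (r.boundedFormula₂ (Term.var (Sum.inr 1))
      (Term.var (Sum.inr 0)))) <|
    BoundedFormula.equal (Term.var (Sum.inr 0)) (Term.var (Sum.inr 1))
  have htri : ∀ (P : Type) [(CLOLang ι).Structure P], P ⊨ tri ↔
      ∀ a b : P, ¬ Structure.RelMap r ![a, b] → ¬ Structure.RelMap r ![b, a] → a = b := by
    intro P _
    refine forall₂_congr fun a b => imp_congr (not_congr BoundedFormula.realize_rel₂)
      (imp_congr (not_congr BoundedFormula.realize_rel₂) Iff.rfl)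
  have htrich : Std.Trichotomous fun x y : M => Structure.RelMap r ![x, y] := by
    refine ⟨(htri M).1 ((h tri).2 ((htri M₀).2 fun a b hab hba => ?_))⟩
    exact le_antisymm (not_lt.1 hba) (not_lt.1 hab)
  have : IsStrictTotalOrder M fun x y : M => Structure.RelMap r ![x, y] := {}
  classical
  refine ⟨linearOrderOfSTO fun x y : M => Structure.RelMap r ![x, y],
    fun k => {x | Structure.RelMap (L := CLOLang ι) (CLORel.color k) ![x]}, ?_⟩
  refine Structure.ext (by ext n f; exact Empty.elim f) ?_
  ext n R v
  cases R with
  | lt =>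
    have hv : v = ![v 0, v 1] := by ext i; fin_cases i <;> rfl
    conv_rhs => rw [hv]
    exact Iff.rfl
  | color k =>
    have hv : v = ![v 0] := by ext i; fin_cases i; rfl
    conv_rhs => rw [hv]
    exact Iff.rfl

/-- A CLO has an elementarily equivalent CLO realizing all finitely satisfiable sets of
one-variable formulas. -/
theorem exists_equiv_realizing_types {M₀ : Type} [LinearOrder M₀] [Nonempty M₀]
    (c₀ : ι → Set M₀) :
    ∃ (S : Type) (_ : LinearOrder S) (c : ι → Set S), CLOEquiv ι S c M₀ c₀ ∧
      ∀ p : Set ((CLOLang ι).Formula Unit),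
        (∀ q : Finset ((CLOLang ι).Formula Unit), ↑q ⊆ p →
          ∃ x : M₀, ∀ φ ∈ q, Sat M₀ c₀ φ fun _ => x) →
        ∃ x : S, ∀ φ ∈ p, Sat S c φ fun _ => x := by
  classical
  let := CLOStr ι M₀ c₀
  let u : Ultrafilter (Finset ((CLOLang ι).Formula Unit)) := Ultrafilter.of Filter.atTop
  let S := (u : Filter (Finset ((CLOLang ι).Formula Unit))).Product fun _ => M₀
  have hreal : ∀ φ : (CLOLang ι).Sentence, S ⊨ φ ↔ M₀ ⊨ φ := fun φ => by
    rw [Ultraproduct.sentence_realize, Filter.eventually_const]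
  obtain ⟨i, c, hc⟩ := exists_cloStr_eq c₀ (inferInstance : (CLOLang ι).Structure S) hreal
  refine ⟨S, i, c, ?_, fun p hp => ?_⟩
  · unfold CLOEquiv
    rw [hc]
    exact elementarilyEquivalent_iff.2 hreal
  · choose x hx using fun q : Finset ((CLOLang ι).Formula Unit) =>
      hp (q.filter (· ∈ p)) fun φ hφ => (Finset.mem_filter.1 hφ).2
    refine ⟨(x : S), fun φ hφ => ?_⟩
    unfold Sat
    rw [hc]
    refine (Ultraproduct.realize_formula_cast φ fun _ => x).2 ?_
    refine Ultrafilter.of_le Filter.atTop ?_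
    filter_upwards [Filter.eventually_ge_atTop {φ}] with q hq
    exact hx q φ (Finset.mem_filter.2 ⟨hq (Finset.mem_singleton_self φ), hφ⟩)

/-- Back-and-forth families preserve all formulas. -/
theorem realize_iff_of_backForth [LinearOrder M] [LinearOrder N] {cM : ι → Set M}
    {cN : ι → Set N} {F : Set (Finset (M × N))} (hF : ∀ f ∈ F, IsPartialIso ι cM cN f)
    (hforth : ∀ f ∈ F, ∀ m : M, ∃ g ∈ F, f ⊆ g ∧ ∃ n : N, (m, n) ∈ g)
    (hback : ∀ f ∈ F, ∀ n : N, ∃ g ∈ F, f ⊆ g ∧ ∃ m : M, (m, n) ∈ g)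
    {α : Type} {n : ℕ} (φ : (CLOLang ι).BoundedFormula α n) :
    ∀ f ∈ F, ∀ (v : α → M) (v' : α → N) (xs : Fin n → M) (xs' : Fin n → N),
      (∀ a, (v a, v' a) ∈ f) → (∀ i, (xs i, xs' i) ∈ f) →
      (@BoundedFormula.Realize (CLOLang ι) M (CLOStr ι M cM) α n φ v xs ↔
        @BoundedFormula.Realize (CLOLang ι) N (CLOStr ι N cN) α n φ v' xs') := by
  let := CLOStr ι M cM
  let := CLOStr ι N cN
  have hterm : ∀ {n : ℕ} (t : (CLOLang ι).Term (α ⊕ Fin n)) (f : Finset (M × N)) (v : α → M)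
      (v' : α → N) (xs : Fin n → M) (xs' : Fin n → N),
      (∀ a, (v a, v' a) ∈ f) → (∀ i, (xs i, xs' i) ∈ f) →
      (t.realize (Sum.elim v xs), t.realize (Sum.elim v' xs')) ∈ f := by
    intro n t f v v' xs xs' hv hxs
    rcases t with (a | i) | g
    · exact hv a
    · exact hxs i
    · exact Empty.elim g
  induction φ with
  | falsum => exact fun _ _ _ _ _ _ _ _ => Iff.rfl
  | equal t₁ t₂ =>
    intro f hf v v' xs xs' hv hxs
    exact (hF f hf _ (hterm t₁ f v v' xs xs' hv hxs) _ (hterm t₂ f v v' xs xs' hv hxs)).2.1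
  | rel R ts =>
    intro f hf v v' xs xs' hv hxs
    have ht := fun m => hterm (ts m) f v v' xs xs' hv hxs
    cases R with
    | lt => exact (hF f hf _ (ht 0) _ (ht 1)).1
    | color k => exact (hF f hf _ (ht 0) _ (ht 0)).2.2 k
  | imp φ ψ ihφ ihψ =>
    intro f hf v v' xs xs' hv hxs
    exact imp_congr (ihφ f hf v v' xs xs' hv hxs) (ihψ f hf v v' xs xs' hv hxs)
  | all φ ih =>
    intro f hf v v' xs xs' hv hxs
    have hsnoc : ∀ g : Finset (M × N), f ⊆ g → ∀ m n, (m, n) ∈ g →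
        ∀ i, ((Fin.snoc xs m : _ → M) i, (Fin.snoc xs' n : _ → N) i) ∈ g := by
      intro g hfg m n hmn
      refine Fin.lastCases (by simpa using hmn) fun i => ?_
      simpa using hfg (hxs i)
    constructor
    · intro h n
      obtain ⟨g, hg, hfg, m, hmn⟩ := hback f hf n
      exact (ih g hg v v' _ _ (fun a => hfg (hv a)) (hsnoc g hfg m n hmn)).1 (h m)
    · intro h m
      obtain ⟨g, hg, hfg, n, hmn⟩ := hforth f hf m
      exact (ih g hg v v' _ _ (fun a => hfg (hv a)) (hsnoc g hfg m n hmn)).2 (h n)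

theorem range_convexTypeOf_eq_of_backForth {M₀ : Type} [LinearOrder M₀] (c₀ : ι → Set M₀)
    [LinearOrder M] [LinearOrder N] {cM : ι → Set M} {cN : ι → Set N}
    (h : BackForthEquiv ι M cM N cN) :
    range (convexTypeOf c₀ cM) = range (convexTypeOf c₀ cN) := by
  obtain ⟨F, ⟨f, hf⟩, hF, hforth, hback⟩ := h
  have key : ∀ g ∈ F, ∀ m n, (m, n) ∈ g → convexTypeOf c₀ cM m = convexTypeOf c₀ cN n := by
    intro g hg m n hmn
    ext φ
    exact and_congr_right fun _ => realize_iff_of_backForth hF hforth hback φ g hg _ _ _ _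
      (fun _ => hmn) (fun i => i.elim0)
  ext Φ
  constructor
  · rintro ⟨m, rfl⟩
    obtain ⟨g, hg, -, n, hmn⟩ := hforth f hf m
    exact ⟨n, (key g hg m n hmn).symm⟩
  · rintro ⟨n, rfl⟩
    obtain ⟨g, hg, -, m, hmn⟩ := hback f hf n
    exact ⟨m, key g hg m n hmn⟩

instance [Countable ι] : Countable (CLOLang ι).Symbols := by
  have hfun : Countable (Σ l, (CLOLang ι).Functions l) := by
    have : IsEmpty (Σ l, (CLOLang ι).Functions l) := ⟨fun x => Empty.elim x.2⟩
    infer_instance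
  have hrel : Countable (Σ l, (CLOLang ι).Relations l) := by
    refine Function.Injective.countable (β := Option ι) (f := fun x => match x with
      | ⟨_, CLORel.lt⟩ => none
      | ⟨_, CLORel.color i⟩ => some i) ?_
    rintro ⟨_, _ | i⟩ ⟨_, _ | j⟩ h
    · rfl
    · exact absurd h (by simp)
    · exact absurd h (by simp)
    · obtain rfl := Option.some.inj h
      rfl
  exact inferInstanceAs (Countable ((Σ l, (CLOLang ι).Functions l) ⊕
    (Σ l, (CLOLang ι).Relations l)))

instance [Countable ι] {n : ℕ} : Countable ((CLOLang ι).BoundedFormula Empty n) :=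
  Function.Injective.countable
    (f := fun φ => (⟨n, φ⟩ : Σ n, (CLOLang ι).BoundedFormula Empty n)) sigma_mk_injective

/-- If a theory has uncountably many convex types, then a model realizing all one-types
realizes continuum many convex types outside any given countable set. -/
theorem exists_injective_convexTypeOf [Countable ι] {M₀ : Type} [LinearOrder M₀]
    {c₀ : ι → Set M₀} (huncount : ¬ {Φ | IsConvexType ι M₀ c₀ Φ}.Countable)
    [LinearOrder M] {c : ι → Set M} (hM : CLOEquiv ι M c M₀ c₀)
    (hsat : ∀ p : Set ((CLOLang ι).Formula Unit),
        (∀ q : Finset ((CLOLang ι).Formula Unit), ↑q ⊆ p →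
          ∃ x : M₀, ∀ φ ∈ q, Sat M₀ c₀ φ fun _ => x) →
        ∃ x : M, ∀ φ ∈ p, Sat M c φ fun _ => x)
    {D : Set (Set ((CLOLang ι).Formula Unit))} (hD : D.Countable) :
    ∃ g : Set ℕ → Set ((CLOLang ι).Formula Unit), Function.Injective g ∧
      (∀ s, g s ∈ range (convexTypeOf c₀ c)) ∧ ∀ s, g s ∉ D := by
  classical
  have hsatM : ∀ p : Set ((CLOLang ι).Formula Unit),
      (∀ q : Finset ((CLOLang ι).Formula Unit), ↑q ⊆ p →
        ∃ (B : Type) (_ : LinearOrder B) (cB : ι → Set B), CLOEquiv ι B cB M₀ c₀ ∧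
          ∃ x : B, ∀ φ ∈ q, Sat B cB φ fun _ => x) →
      ∃ x : M, ∀ φ ∈ p, Sat M c φ fun _ => x := by
    intro p hp
    refine hsat p fun q hq => ?_
    obtain ⟨B, _, cB, hB, x, hx⟩ := hp q hq
    have key := (exists_sat_iff_of_equiv hB (Formula.iInf fun φ : q => φ.1)).1
      ⟨x, (sat_iInf cB _ _).2 fun φ => hx φ.1 φ.2⟩
    obtain ⟨y, hy⟩ := key
    exact ⟨y, fun φ hφ => (sat_iInf c₀ _ _).1 hy ⟨φ, hφ⟩⟩
  let K : Set ((CLOLang ι).Formula Unit → Bool) :=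
    {u | ∃ x : M, ∀ φ, u φ = true ↔ φ ∈ convexTypeOf c₀ c x}
  have hKeq : K = ⋂ q : Finset ((CLOLang ι).Formula Unit),
      {u | ∃ x : M, ∀ φ ∈ q, u φ = true ↔ φ ∈ convexTypeOf c₀ c x} := by
    refine Subset.antisymm (fun u ⟨x, hx⟩ => mem_iInter.2 fun q => ⟨x, fun φ _ => hx φ⟩) ?_
    intro u hu
    rw [mem_iInter] at hu
    have hconv : ∀ φ, u φ = true → ConvexFml ι M₀ c₀ φ := fun φ hφ => by
      obtain ⟨x, hx⟩ := hu {φ}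
      exact ((hx φ (Finset.mem_singleton_self φ)).1 hφ).1
    let signed : (CLOLang ι).Formula Unit → (CLOLang ι).Formula Unit := fun φ =>
      if u φ = true then φ else φ.not
    have hsigned : ∀ φ, ConvexFml ι M₀ c₀ φ → ∀ x : M,
        (Sat M c (signed φ) (fun _ => x) ↔ (u φ = true ↔ φ ∈ convexTypeOf c₀ c x)) := by
      intro φ hφ x
      have hmem : φ ∈ convexTypeOf c₀ c x ↔ Sat M c φ fun _ => x := and_iff_right hφ
      rw [hmem]
      by_cases h : u φ = true
      · simp only [signed, h, if_true, true_iff]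
      · simp only [signed, h, Bool.false_eq_true, if_false, false_iff]
        exact sat_not c φ _
    obtain ⟨x, hx⟩ := hsatM (signed '' {φ | ConvexFml ι M₀ c₀ φ}) (by
      intro q hq
      rw [Finset.subset_set_image_iff] at hq
      obtain ⟨q', hq', rfl⟩ := hq
      obtain ⟨x, hx⟩ := hu q'
      refine ⟨M, inferInstance, c, hM, x, fun ψ hψ => ?_⟩
      obtain ⟨φ, hφ, rfl⟩ := Finset.mem_image.1 hψ
      exact (hsigned φ (hq' hφ) x).2 (hx φ hφ))
    refine ⟨x, fun φ => ?_⟩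
    by_cases hφ : ConvexFml ι M₀ c₀ φ
    · exact (hsigned φ hφ x).1 (hx _ ⟨φ, hφ, rfl⟩)
    · exact iff_of_false (fun h => hφ (hconv φ h)) fun h => hφ h.1
  have hKclosed : IsClosed K := by
    rw [hKeq]
    refine isClosed_iInter fun q => ?_
    have hpre : {u : (CLOLang ι).Formula Unit → Bool |
        ∃ x : M, ∀ φ ∈ q, u φ = true ↔ φ ∈ convexTypeOf c₀ c x} =
        (fun u (φ : q) => u φ.1) ⁻¹'
          {u | ∃ x : M, ∀ φ : q, u φ = true ↔ φ.1 ∈ convexTypeOf c₀ c x} := by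
      ext u
      exact exists_congr fun x => ⟨fun h φ => h φ.1 φ.2, fun h φ hφ => h ⟨φ, hφ⟩⟩
    rw [hpre]
    exact (isClosed_discrete _).preimage (by fun_prop)
  have hKunc : ¬ K.Countable := by
    intro hK
    refine huncount ((hK.image fun u => {φ | u φ = true}).mono ?_)
    intro Φ hΦ
    obtain ⟨B, iB, cB, hB, b, hb⟩ := hΦ.2.1
    obtain ⟨x, hx⟩ := hsatM Φ fun q hq => ⟨B, iB, cB, hB, b, fun φ hφ => hb φ (hq hφ)⟩
    have hΦx := eq_convexTypeOf_of_isConvexType hM hΦ hx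
    refine ⟨fun φ => decide (φ ∈ Φ), ⟨x, fun φ => by rw [decide_eq_true_iff, hΦx]⟩, ?_⟩
    ext φ
    exact decide_eq_true_iff
  have : PolishSpace Bool := inferInstance
  obtain ⟨f, hfK, -, hf⟩ := hKclosed.exists_nat_bool_injection_of_not_countable hKunc
  let g : Set ℕ → Set ((CLOLang ι).Formula Unit) := fun s =>
    {φ | f (fun n => decide (n ∈ s)) φ = true}
  have hg : Function.Injective g := by
    intro s t hst
    have hfun : f (fun n => decide (n ∈ s)) = f (fun n => decide (n ∈ t)) := by
      ext φ
      rw [Bool.eq_iff_iff]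
      exact Set.ext_iff.1 hst φ
    ext n
    simpa using congrFun (hf hfun) n
  have hgrange : ∀ s, g s ∈ range (convexTypeOf c₀ c) := by
    intro s
    obtain ⟨x, hx⟩ := hfK ⟨fun n => decide (n ∈ s), rfl⟩
    exact ⟨x, Set.ext fun φ => (hx φ).symm⟩
  have hcard : Cardinal.mk ((g ⁻¹' D)ᶜ : Set (Set ℕ)) = Cardinal.mk (Set ℕ) := by
    refine Cardinal.mk_compl_of_infinite _ ?_
    refine lt_of_le_of_lt (Cardinal.le_aleph0_iff_set_countable.2 (hD.preimage hg)) ?_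
    rw [Cardinal.mk_set, Cardinal.mk_nat]
    exact Cardinal.cantor _
  obtain ⟨e⟩ := Cardinal.eq.1 hcard
  exact ⟨fun s => g (e.symm s), fun s t h => e.symm.injective (Subtype.ext (hg h)),
    fun s => hgrange _, fun s => (e.symm s).2⟩

end CLO

theorem stmt18 {ι : Type} [Countable ι] {M₀ : Type} [LinearOrder M₀] (c₀ : ι → Set M₀)
    (hLS : LocallySimple ι M₀ c₀)
    (huncount : ¬ {Φ | IsConvexType ι M₀ c₀ Φ}.Countable) :
    ∃ (N : Set (Set ℕ) → Type) (iN : ∀ s, LinearOrder (N s)) (cN : ∀ s, ι → Set (N s)),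
      (∀ s, letI := iN s; CLOEquiv ι (N s) (cN s) M₀ c₀) ∧
      (∀ s t, s ≠ t →
        (letI := iN s;
          {Φ | IsConvexType ι M₀ c₀ Φ ∧ (TypeSet ι (N s) (cN s) Φ).Nonempty}) ≠
        (letI := iN t;
          {Φ | IsConvexType ι M₀ c₀ Φ ∧ (TypeSet ι (N t) (cN t) Φ).Nonempty})) ∧
      ∀ s t, s ≠ t → letI := iN s; letI := iN t;
        ¬ BackForthEquiv ι (N s) (cN s) (N t) (cN t) := by
  have hne : Nonempty M₀ := by
    by_contra hempty
    refine huncount (Set.Countable.mono ?_ countable_empty)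
    rintro Φ ⟨-, ⟨B, _, cB, hB, b, -⟩, -⟩
    obtain ⟨x, -⟩ := (CLO.exists_sat_iff_of_equiv hB (BoundedFormula.falsum.not)).1 ⟨b, id⟩
    exact hempty ⟨x⟩
  obtain ⟨S, iS, c, hS, hsat⟩ := CLO.exists_equiv_realizing_types c₀
  have hdense : ∀ ψ : (CLOLang ι).BoundedFormula Empty 1, ∃ d : S,
      (∃ a, CLO.FinSat S c ψ fun _ => a) → CLO.FinSat S c ψ fun _ => d := by
    intro ψ
    by_cases h : ∃ a, CLO.FinSat S c ψ fun _ => a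
    · exact ⟨h.choose, fun _ => h.choose_spec⟩
    · obtain ⟨d, -⟩ := hsat ∅ fun q hq => ⟨hne.some, fun φ hφ => (hq hφ).elim⟩
      exact ⟨d, fun h' => (h h').elim⟩
  choose d hd using hdense
  let D := range fun ψ => CLO.convexTypeOf c₀ c (d ψ)
  obtain ⟨g, hginj, hgmem, hgD⟩ :=
    CLO.exists_injective_convexTypeOf huncount hS hsat (countable_range _ : D.Countable)
  let A : Set (Set ℕ) → Set S := fun s => {x | CLO.convexTypeOf c₀ c x ∈ D ∪ g '' s}
  have helem := fun s => CLO.elementary_of_dense hS (D ∪ g '' s) fun ψ hψ =>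
    ⟨d ψ, Or.inl ⟨ψ, rfl⟩, hd ψ hψ⟩
  have hequiv : ∀ s, CLOEquiv ι (A s) (subColor c (A s)) M₀ c₀ := fun s =>
    CLO.equiv_trans (helem s).1 hS
  have hrange : ∀ s, range (CLO.convexTypeOf c₀ (subColor c (A s))) = D ∪ g '' s := by
    intro s
    have hval : ∀ x : A s, CLO.convexTypeOf c₀ (subColor c (A s)) x =
        CLO.convexTypeOf c₀ c x.1 := fun x =>
      Set.ext fun φ => and_congr_right fun _ => (helem s).2 φ x
    refine Subset.antisymm ?_ fun Φ hΦ => ?_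
    · rintro _ ⟨x, rfl⟩
      rw [hval]
      exact x.2
    · have hreal : Φ ∈ range (CLO.convexTypeOf c₀ c) := by
        rcases hΦ with ⟨ψ, rfl⟩ | ⟨t, _, rfl⟩
        · exact ⟨_, rfl⟩
        · exact hgmem t
      obtain ⟨x, rfl⟩ := hreal
      exact ⟨⟨x, hΦ⟩, hval _⟩
  have hinj : ∀ s t, D ∪ g '' s = D ∪ g '' t → s ⊆ t := by
    intro s t h a ha
    have hmem : g a ∈ D ∪ g '' t := h ▸ Or.inr ⟨a, ha, rfl⟩
    rcases hmem with hmem | ⟨b, hb, hab⟩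
    · exact (hgD a hmem).elim
    · exact hginj hab ▸ hb
  have hdistinct : ∀ s t, s ≠ t → range (CLO.convexTypeOf c₀ (subColor c (A s))) ≠
      range (CLO.convexTypeOf c₀ (subColor c (A t))) := by
    intro s t hst h
    rw [hrange, hrange] at h
    exact hst (Subset.antisymm (hinj s t h) (hinj t s h.symm))
  refine ⟨fun s => A s, fun s => inferInstance, fun s => subColor c (A s), hequiv, ?_, ?_⟩
  · intro s t hst
    rw [CLO.realizedConvexTypes_eq_range (hequiv s), CLO.realizedConvexTypes_eq_range (hequiv t)]
    exact hdistinct s t hst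
  · intro s t hst h
    exact hdistinct s t hst (CLO.range_convexTypeOf_eq_of_backForth c₀ h)
end
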